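/- arXiv:2210.01373 — 3 statements merged into one kernel-verified Lean document; each statement's English description precedes it below -/
import Mathlib

section
/- Let N ≥ 5 be an integer, λ ∈ ℝ and μ > 0. With u_ε, Ω, φ, U_ε and the functional I as in the context, there exists ε₀ > 0 such that for every ε ∈ (0, ε₀) and every t ≥ 0, I(t·U_ε) < K_N / N, where K_N = ∫_{ℝ^N} |∇u_1(x)|² dx. -/
open MeasureTheory

set_option maxHeartbeats 1000000 in
/-- the purely real part of the argument -/
theorem bub_real (N : ℝ) (hN : 5 ≤ N) (lam μ : ℝ) (hμ : 0 < μ) (K A A' q Q D : ℝ) (hK : 0 < K)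
    (hA : 0 ≤ A) (hA' : 0 ≤ A') (hq : 0 < q) (hqQ : q ≤ Q) (hD : 0 ≤ D) (r : ℝ) (hr : 0 < r) :
    ∃ ε₀ : ℝ, 0 < ε₀ ∧ ε₀ ≤ r ∧ ∀ ε ∈ Set.Ioo (0 : ℝ) ε₀, ∀ s β qe : ℝ, 0 ≤ s → 0 ≤ β →
      K - A' * ε ^ 2 ≤ β → q ≤ qe → qe ≤ Q →
      s / 2 * (K + A * ε ^ 2) - (N - 2) / (2 * N) * (s ^ (N / (N - 2)) * β)
        - lam / 2 * (s * ε ^ 2 * qe)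
        - μ / 2 * (ε ^ 2 * s * (qe * ((N - 2) * Real.log (1 / ε) + Real.log s - 1) - D)) < K / N := by
  set E := A + (|lam| + μ) * Q + μ * D with hE
  have hQ : 0 < Q := hq.trans_le hqQ
  have hE0 : 0 ≤ E := by positivity
  set R := Real.log N + (E + (2 * A' + 1)) / (μ * q) with hR
  have hlogN : 0 ≤ Real.log N := Real.log_nonneg (by linarith)
  have hR0 : 0 ≤ R := by positivity
  set θ := K / (N * (E + μ * Q + 2 * A' + 1)) with hθ
  have hθ0 : 0 < θ := by positivity
  refine ⟨min r (min 1 (min (Real.exp (-R)) θ)), by positivity, min_le_left _ _, ?_⟩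
  rintro ε ⟨he0, he⟩ s β qe hs hβ0 hβ hqe hqeQ
  simp only [lt_min_iff] at he
  obtain ⟨-, he1, heR, heθ⟩ := he
  have hl : R ≤ Real.log (1 / ε) := by
    rw [one_div, Real.log_inv]
    have := Real.log_le_log he0 heR.le
    rw [Real.log_exp] at this; linarith
  set l := Real.log (1 / ε) with hldef
  have he2 : ε ^ 2 < θ := by nlinarith
  have he20 : 0 < ε ^ 2 := by positivity
  set e := ε ^ 2 with hedef
  have he3 : e * (E + μ * Q + 2 * A' + 1) < K / N := by
    rw [hθ, lt_div_iff₀ (by positivity)] at he2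
    rw [lt_div_iff₀ (by positivity)]; nlinarith
  have hqe0 : 0 < qe := hq.trans_le hqe
  have hbr : s / 2 * (K + A * e) - (N - 2) / (2 * N) * (s ^ (N / (N - 2)) * β)
        - lam / 2 * (s * e * qe)
        - μ / 2 * (e * s * (qe * ((N - 2) * l + Real.log s - 1) - D)) ≤
      s / 2 * K - (N - 2) / (2 * N) * (s ^ (N / (N - 2)) * β) +
        s * e / 2 * (E - μ * qe * ((N - 2) * l + Real.log s)) := by
    have h1 : (-lam) * qe + μ * qe ≤ (|lam| + μ) * Q := by
      have : -lam ≤ |lam| := neg_le_abs lam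
      have : (|lam| + μ) * qe ≤ (|lam| + μ) * Q := by gcongr
      nlinarith
    have h2 : 0 ≤ s * e / 2 := by positivity
    have := mul_le_mul_of_nonneg_left h1 h2
    rw [hE]; linarith
  refine hbr.trans_lt ?_
  have hsp : 0 ≤ s ^ (N / (N - 2)) := Real.rpow_nonneg hs _
  have hN2 : 0 < N - 2 := by linarith
  have hc : 0 < (N - 2) / (2 * N) := by positivity
  have hl0 : 0 ≤ l := hR0.trans hl
  by_cases hsN : s ≤ 1 / N
  · -- small s
    have h1 : -(s * Real.log s) ≤ 1 := by
      rcases hs.eq_or_lt with rfl | hs0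
      · simp
      · have := Real.one_sub_inv_le_log_of_pos hs0
        have h3 : s * (1 - s⁻¹) ≤ s * Real.log s := by gcongr
        rw [mul_sub, mul_inv_cancel₀ hs0.ne'] at h3
        linarith
    have h2 : s * (E - μ * qe * ((N - 2) * l + Real.log s)) ≤ E + μ * Q := by
      have hs1 : s ≤ 1 := hsN.trans (by rw [div_le_one (by linarith)]; linarith)
      have a1 : s * E ≤ E := by nlinarith
      have a2 : 0 ≤ s * (μ * qe * ((N - 2) * l)) := by positivity
      have a3 : (μ * qe) * (-(s * Real.log s)) ≤ μ * qe * 1 := by gcongr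
      have a4 : μ * qe ≤ μ * Q := by gcongr
      linarith
    have h3 : s / 2 * K ≤ 1 / 2 * (K / N) := by
      have : s * K ≤ 1 / N * K := by gcongr
      calc s / 2 * K = 1 / 2 * (s * K) := by ring
        _ ≤ 1 / 2 * (1 / N * K) := by gcongr
        _ = _ := by ring
    have h4 : e / 2 * (s * (E - μ * qe * ((N - 2) * l + Real.log s))) ≤ e / 2 * (E + μ * Q) := by gcongr
    have h5 : 0 ≤ (N - 2) / (2 * N) * (s ^ (N / (N - 2)) * β) := by positivity
    have h6 : 0 ≤ e * (2 * A' + 1) := by positivity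
    have h7 : 0 ≤ e * (E + μ * Q) := by positivity
    have h8 : 0 < K / N := by positivity
    linarith
  · push Not at hsN
    have hs0 : 0 < s := lt_trans (by positivity) hsN
    have hlogs : -Real.log N ≤ Real.log s := by
      rw [← Real.log_inv, ← one_div]
      exact Real.log_le_log (by positivity) hsN.le
    have hbrk : E - μ * qe * ((N - 2) * l + Real.log s) ≤ -(2 * A' + 1) := by
      have h1 : (E + (2 * A' + 1)) / (μ * q) ≤ (N - 2) * l + Real.log s := by
        have : l ≤ (N - 2) * l := by nlinarith
        linarith
      have h2 : 0 ≤ (E + (2 * A' + 1)) / (μ * q) := by positivity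
      have h3 : (μ * q) * ((E + (2 * A' + 1)) / (μ * q)) ≤ (μ * qe) * ((N - 2) * l + Real.log s) := by
        gcongr
      rw [mul_div_cancel₀ _ (by positivity)] at h3
      linarith
    have hbs : s * e / 2 * (E - μ * qe * ((N - 2) * l + Real.log s)) ≤ s * e / 2 * (-(2 * A' + 1)) := by
      gcongr
    have hfac : s ^ (N / (N - 2)) = s * s ^ (2 / (N - 2)) := by
      rw [← Real.rpow_one_add' hs (by positivity)]
      congr 1; field_simp; ring
    by_cases hT : s ^ (2 / (N - 2)) ≤ 2 * (N / (N - 2))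
    · -- medium
      have hY : s / 2 - (N - 2) / (2 * N) * s ^ (N / (N - 2)) ≤ 1 / N := by
        have hB := one_add_mul_self_le_rpow_one_add (s := s - 1) (by linarith)
          (p := N / (N - 2)) (by rw [le_div_iff₀ hN2]; linarith)
        rw [show 1 + (s - 1) = s by ring] at hB
        have := mul_le_mul_of_nonneg_left hB hc.le
        have e1 : (N - 2) / (2 * N) * (1 + N / (N - 2) * (s - 1)) = (N-2)/(2 * N) + (s-1)/2 := by
          field_simp
        have e2 : (N - 2) / (2 * N) = 1 / 2 - 1 / N := by field_simp
        linarith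
      have h1 : (N - 2) / (2 * N) * (s ^ (N / (N - 2)) * (K - A' * e)) ≤
          (N - 2) / (2 * N) * (s ^ (N / (N - 2)) * β) := by gcongr
      have h2 : (N - 2) / (2 * N) * s ^ (N / (N - 2)) ≤ s := by
        rw [hfac]
        calc (N - 2) / (2 * N) * (s * s ^ (2 / (N - 2))) ≤ (N - 2) / (2 * N) * (s * (2 * (N / (N - 2)))) := by
              gcongr
          _ = s := by field_simp
      have h3 := mul_le_mul_of_nonneg_left h2 (by positivity : 0 ≤ A' * e)
      have h4 := mul_le_mul_of_nonneg_left hY hK.le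
      have h5 : 0 < s * e := by positivity
      rw [mul_one_div] at h4
      linarith
    · push Not at hT
      have hKb : K / 2 ≤ β := by
        have : K / N ≤ K / 5 := by gcongr
        have : 0 ≤ e * (E + μ * Q + 1) := by positivity
        linarith
      have h2 : s ≤ (N - 2) / (2 * N) * s ^ (N / (N - 2)) := by
        rw [hfac]
        calc s = (N - 2) / (2 * N) * (s * (2 * (N / (N - 2)))) := by field_simp
          _ ≤ (N - 2) / (2 * N) * (s * s ^ (2 / (N - 2))) := by gcongr
      have h3 : s * (K / 2) ≤ (N - 2) / (2 * N) * s ^ (N / (N - 2)) * β := by gcongr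
      have h4 : 0 < K / N := by positivity
      have h5 : 0 ≤ s * e / 2 * (2 * A' + 1) := by positivity
      linarith

theorem bub_int (N : ℕ) (r : ℝ) (hr : (N : ℝ) < 2 * r) :
    Integrable (fun y : EuclideanSpace ℝ (Fin N) => (1 + ‖y‖ ^ 2) ^ (-r)) := by
  have := integrable_rpow_neg_one_add_norm_sq (E := EuclideanSpace ℝ (Fin N)) (μ := volume)
    (r := 2 * r) (by simpa using hr)
  convert this using 3
  ring

theorem bub_ident (N : ℕ) (hN : 5 ≤ N) :
    ((N : ℝ) - 2) * ∫ y : EuclideanSpace ℝ (Fin N), ‖y‖ ^ 2 * (1 + ‖y‖ ^ 2) ^ (-(N : ℝ)) =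
      (N : ℝ) * ∫ y : EuclideanSpace ℝ (Fin N), (1 + ‖y‖ ^ 2) ^ (-(N : ℝ)) := by
  have hNr : (5 : ℝ) ≤ N := by exact_mod_cast hN
  have i1 : Integrable (fun y : EuclideanSpace ℝ (Fin N) => (1 + ‖y‖ ^ 2) ^ (-(N : ℝ))) :=
    bub_int N N (by linarith)
  have i2 : Integrable (fun y : EuclideanSpace ℝ (Fin N) => ‖y‖ ^ 2 * (1 + ‖y‖ ^ 2) ^ (-(N : ℝ))) := by
    have h := (bub_int N (N - 1) (by linarith)).sub i1
    convert h using 2 with y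
    have : (1 + ‖y‖ ^ 2) ^ (-((N : ℝ) - 1)) = (1 + ‖y‖ ^ 2) * (1 + ‖y‖ ^ 2) ^ (-(N : ℝ)) := by
      rw [← Real.rpow_one_add' (by positivity) (by linarith)]; congr 1; ring
    simp only [Pi.sub_apply, this]; ring
  have key : ∫ y : EuclideanSpace ℝ (Fin N), ((N : ℝ) * (1 + ‖y‖ ^ 2) ^ (-(N : ℝ)) -
      ((N : ℝ) - 2) * (‖y‖ ^ 2 * (1 + ‖y‖ ^ 2) ^ (-(N : ℝ)))) = 0 := by
    have i3 := (i1.const_mul (N : ℝ)).sub (i2.const_mul ((N : ℝ) - 2))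
    have : Nontrivial (EuclideanSpace ℝ (Fin N)) := by
      have : Nonempty (Fin N) := ⟨⟨0, by omega⟩⟩
      infer_instance
    set f : ℝ → ℝ := fun r => (N : ℝ) * (1 + r ^ 2) ^ (-(N : ℝ)) -
      ((N : ℝ) - 2) * (r ^ 2 * (1 + r ^ 2) ^ (-(N : ℝ))) with hf
    have i4 : Integrable (fun y : EuclideanSpace ℝ (Fin N) => f ‖y‖) := i3
    rw [integrable_fun_norm_addHaar volume (f := f)] at i4
    change ∫ y : EuclideanSpace ℝ (Fin N), f ‖y‖ = 0
    rw [integral_fun_norm_addHaar volume f]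
    have : ∫ y in Set.Ioi (0 : ℝ), y ^ (Module.finrank ℝ (EuclideanSpace ℝ (Fin N)) - 1) • f y = 0 := by
      have hd : ∀ x : ℝ, HasDerivAt (fun r : ℝ => r ^ N * (1 + r ^ 2) ^ (1 - (N : ℝ)))
          (x ^ (Module.finrank ℝ (EuclideanSpace ℝ (Fin N)) - 1) • f x) x := by
        intro x
        have h1 : HasDerivAt (fun r : ℝ => 1 + r ^ 2) (2 * x) x := by
          simpa using (hasDerivAt_pow 2 x).const_add 1
        have h2 := h1.rpow_const (p := 1 - (N : ℝ)) (Or.inl (by positivity))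
        convert! (hasDerivAt_pow N x).mul h2 using 1
        have e1 : (1 + x ^ 2) ^ (1 - (N : ℝ)) = (1 + x ^ 2) * (1 + x ^ 2) ^ (-(N : ℝ)) := by
          rw [← Real.rpow_one_add' (by positivity) (by linarith)]; congr 1
        have e2 : x ^ N = x ^ (N - 1) * x := by rw [← pow_succ]; congr 1; omega
        have e3 : (1 - (N : ℝ) - 1) = -(N : ℝ) := by ring
        simp only [finrank_euclideanSpace, Fintype.card_fin, smul_eq_mul, hf, e1, e2, e3]
        ring
      rw [integral_Ioi_of_hasDerivAt_of_tendsto (m := 0) (hd 0).continuousAt.continuousWithinAt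
        (fun x _ => hd x) i4]
      · simp; omega
      · refine squeeze_zero' (g := fun x : ℝ => x⁻¹) ?_ ?_ tendsto_inv_atTop_zero
        · filter_upwards [Filter.eventually_ge_atTop 0] with x hx
          positivity
        · filter_upwards [Filter.eventually_ge_atTop 1] with x hx
          have hx0 : 0 < x := by linarith
          calc x ^ N * (1 + x ^ 2) ^ (1 - (N : ℝ)) ≤ x ^ N * (x ^ 2) ^ (1 - (N : ℝ)) := by
                refine mul_le_mul_of_nonneg_left ?_ (by positivity)
                exact Real.rpow_le_rpow_of_nonpos (by positivity) (by linarith) (by linarith)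
            _ = x ^ (2 - (N : ℝ)) := by
                rw [← Real.rpow_natCast x N, ← Real.rpow_natCast x 2, ← Real.rpow_mul hx0.le,
                  ← Real.rpow_add hx0]
                congr 1; push_cast; ring
            _ ≤ x ^ (-1 : ℝ) := Real.rpow_le_rpow_of_exponent_le hx (by linarith)
            _ = x⁻¹ := Real.rpow_neg_one x
    rw [this]; simp
  rw [integral_sub (i1.const_mul _) (i2.const_mul _), integral_const_mul, integral_const_mul] at key
  linarith

noncomputable def bubC (N : ℕ) : ℝ := ((N : ℝ) * ((N : ℝ) - 2)) ^ (((N : ℝ) - 2) / 4)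

noncomputable def bubV (N : ℕ) (y : EuclideanSpace ℝ (Fin N)) : ℝ :=
  bubC N * (1 + ‖y‖ ^ 2) ^ (-(((N : ℝ) - 2) / 2))

theorem bubC_pos (N : ℕ) (hN : 5 ≤ N) : 0 < bubC N := by
  have hNr : (5 : ℝ) ≤ N := by exact_mod_cast hN
  have : 0 < (N : ℝ) - 2 := by linarith
  unfold bubC; positivity

theorem bubV_pos (N : ℕ) (hN : 5 ≤ N) (y) : 0 < bubV N y := by
  have := bubC_pos N hN
  unfold bubV; positivity

theorem bubV_sq (N : ℕ) (y) : bubV N y ^ 2 = bubC N ^ 2 * (1 + ‖y‖ ^ 2) ^ (-((N : ℝ) - 2)) := by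
  unfold bubV
  rw [mul_pow, ← Real.rpow_natCast (_ ^ (-(((N : ℝ) - 2) / 2))), ← Real.rpow_mul (by positivity)]
  congr 2; push_cast; ring

theorem bubV_crit (N : ℕ) (hN : 5 ≤ N) (y) : bubV N y ^ (2 * (N : ℝ) / ((N : ℝ) - 2)) =
    bubC N ^ 2 * ((N : ℝ) * ((N : ℝ) - 2)) * (1 + ‖y‖ ^ 2) ^ (-(N : ℝ)) := by
  have hNr : (5 : ℝ) ≤ N := by exact_mod_cast hN
  have h2 : 0 < (N : ℝ) - 2 := by linarith
  have hNN : 0 < (N : ℝ) * ((N : ℝ) - 2) := by positivity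
  unfold bubV bubC
  rw [Real.mul_rpow (by positivity) (by positivity), ← Real.rpow_mul (by positivity),
    ← Real.rpow_mul (by positivity), ← Real.rpow_natCast (_ ^ _), ← Real.rpow_mul (by positivity),
    ← Real.rpow_add_one hNN.ne']
  congr 2
  · push_cast; field_simp; ring
  · field_simp

theorem bubV_cont (N : ℕ) : Continuous (bubV N) := by
  unfold bubV
  refine continuous_const.mul (Continuous.rpow_const (by fun_prop) fun y => Or.inl (by positivity))

theorem bubV_deriv (N : ℕ) (y : EuclideanSpace ℝ (Fin N)) :
    HasFDerivAt (bubV N)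
      ((-(bubC N * ((N : ℝ) - 2) * (1 + ‖y‖ ^ 2) ^ (-((N : ℝ) / 2)))) • innerSL ℝ y) y := by
  have h1 : HasFDerivAt (fun y : EuclideanSpace ℝ (Fin N) => 1 + ‖y‖ ^ 2) (2 • innerSL ℝ y) y :=
    (hasStrictFDerivAt_norm_sq y).hasFDerivAt.const_add 1
  have h2 := (h1.rpow_const (p := (-(((N : ℝ) - 2) / 2))) (Or.inl (by positivity))).const_mul (bubC N)
  convert! h2 using 1
  rw [show -(((N : ℝ) - 2) / 2) - 1 = -((N : ℝ) / 2) by ring]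
  ext z
  simp
  ring

theorem bubV_norm_deriv (N : ℕ) (hN : 5 ≤ N) (y : EuclideanSpace ℝ (Fin N)) :
    ‖fderiv ℝ (bubV N) y‖ = bubC N * ((N : ℝ) - 2) * (1 + ‖y‖ ^ 2) ^ (-((N : ℝ) / 2)) * ‖y‖ := by
  have hNr : (5 : ℝ) ≤ N := by exact_mod_cast hN
  have h2 : 0 < (N : ℝ) - 2 := by linarith
  have := bubC_pos N hN
  rw [(bubV_deriv N y).fderiv, norm_smul, innerSL_apply_norm, norm_neg, Real.norm_of_nonneg (by positivity)]

theorem bubV_norm_deriv_sq (N : ℕ) (hN : 5 ≤ N) (y : EuclideanSpace ℝ (Fin N)) :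
    ‖fderiv ℝ (bubV N) y‖ ^ 2 =
      bubC N ^ 2 * ((N : ℝ) - 2) ^ 2 * (‖y‖ ^ 2 * (1 + ‖y‖ ^ 2) ^ (-(N : ℝ))) := by
  rw [bubV_norm_deriv N hN, mul_pow, mul_pow, mul_pow, ← Real.rpow_natCast (_ ^ (-((N : ℝ) / 2))),
    ← Real.rpow_mul (by positivity), show -((N : ℝ) / 2) * ((2 : ℕ) : ℝ) = -(N : ℝ) by push_cast; ring]
  ring

theorem bubV_deriv_le (N : ℕ) (hN : 5 ≤ N) (y : EuclideanSpace ℝ (Fin N)) :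
    ‖fderiv ℝ (bubV N) y‖ * ‖y‖ ≤ ((N : ℝ) - 2) * bubV N y := by
  have hNr : (5 : ℝ) ≤ N := by exact_mod_cast hN
  have h2 : 0 < (N : ℝ) - 2 := by linarith
  have := bubC_pos N hN
  rw [bubV_norm_deriv N hN, bubV]
  have e : (1 + ‖y‖ ^ 2) ^ (-(((N : ℝ) - 2) / 2)) = (1 + ‖y‖ ^ 2) * (1 + ‖y‖ ^ 2) ^ (-((N : ℝ) / 2)) := by
    rw [← Real.rpow_one_add' (by positivity) (by linarith)]; congr 1; ring
  rw [e]
  have : 0 ≤ bubC N * ((N : ℝ) - 2) * (1 + ‖y‖ ^ 2) ^ (-((N : ℝ) / 2)) := by positivity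
  linarith

theorem bub_int_sq (N : ℕ) (hN : 5 ≤ N) : Integrable (fun y => bubV N y ^ 2) := by
  have hNr : (5 : ℝ) ≤ N := by exact_mod_cast hN
  simp only [bubV_sq]
  exact (bub_int N _ (by linarith)).const_mul _

theorem bub_int_crit (N : ℕ) (hN : 5 ≤ N) :
    Integrable (fun y => bubV N y ^ (2 * (N : ℝ) / ((N : ℝ) - 2))) := by
  have hNr : (5 : ℝ) ≤ N := by exact_mod_cast hN
  simp only [bubV_crit N hN]
  exact (bub_int N _ (by linarith)).const_mul _

theorem bub_int_norm (N : ℕ) (hN : 5 ≤ N) : Integrable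
    (fun y : EuclideanSpace ℝ (Fin N) => ‖y‖ ^ 2 * (1 + ‖y‖ ^ 2) ^ (-(N : ℝ))) := by
  have hNr : (5 : ℝ) ≤ N := by exact_mod_cast hN
  have h := (bub_int N (N - 1) (by linarith)).sub (bub_int N N (by linarith))
  convert h using 2 with y
  have : (1 + ‖y‖ ^ 2) ^ (-((N : ℝ) - 1)) = (1 + ‖y‖ ^ 2) * (1 + ‖y‖ ^ 2) ^ (-(N : ℝ)) := by
    rw [← Real.rpow_one_add' (by positivity) (by linarith)]; congr 1; ring
  simp only [Pi.sub_apply, this]; ring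

theorem bub_int_crit2 (N : ℕ) (hN : 5 ≤ N) :
    Integrable (fun y => ‖y‖ ^ 2 * bubV N y ^ (2 * (N : ℝ) / ((N : ℝ) - 2))) := by
  simp only [bubV_crit N hN]
  convert (bub_int_norm N hN).const_mul (bubC N ^ 2 * ((N : ℝ) * ((N : ℝ) - 2))) using 2
  ring

theorem bub_int_deriv (N : ℕ) (hN : 5 ≤ N) :
    Integrable (fun y => ‖fderiv ℝ (bubV N) y‖ ^ 2) := by
  simp only [bubV_norm_deriv_sq N hN]
  exact (bub_int_norm N hN).const_mul _

theorem bub_K_eq (N : ℕ) (hN : 5 ≤ N) :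
    ∫ y, ‖fderiv ℝ (bubV N) y‖ ^ 2 = ∫ y, bubV N y ^ (2 * (N : ℝ) / ((N : ℝ) - 2)) := by
  simp only [bubV_norm_deriv_sq N hN, bubV_crit N hN]
  rw [integral_const_mul, integral_const_mul]
  linear_combination (bubC N ^ 2 * ((N : ℝ) - 2)) * bub_ident N hN

theorem bub_integral_pos (N : ℕ) (f : EuclideanSpace ℝ (Fin N) → ℝ) (hc : Continuous f)
    (h0 : ∀ y, 0 < f y) (hi : Integrable f) : 0 < ∫ y, f y := by
  exact integral_pos_of_integrable_nonneg_nonzero (x := 0) hc hi (fun y => (h0 y).le) (h0 0).ne'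

theorem bub_int_log (N : ℕ) (hN : 5 ≤ N) :
    Integrable (fun y => bubV N y ^ 2 * (1 + |Real.log (bubV N y ^ 2)|)) := by
  have hNr : (5 : ℝ) ≤ N := by exact_mod_cast hN
  have h2 : 0 < (N : ℝ) - 2 := by linarith
  have hC := bubC_pos N hN
  have i1 := (bub_int N ((N : ℝ) - 2) (by linarith)).const_mul (bubC N ^ 2 * (1 + |Real.log (bubC N ^ 2)|))
  have i2 := (bub_int N ((N : ℝ) - 2 - 1 / 4) (by linarith)).const_mul (bubC N ^ 2 * ((N : ℝ) - 2) * 4)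
  refine (i1.add i2).mono' ?_ ?_
  · apply Continuous.aestronglyMeasurable
    have := bubV_cont N
    refine (this.pow 2).mul (continuous_const.add (Continuous.abs ?_))
    exact (this.pow 2).log fun y => pow_ne_zero 2 (bubV_pos N hN y).ne'
  · refine Filter.Eventually.of_forall fun y => ?_
    have hn : 0 ≤ bubV N y ^ 2 * (1 + |Real.log (bubV N y ^ 2)|) :=
      mul_nonneg (sq_nonneg _) (add_nonneg zero_le_one (abs_nonneg _))
    rw [Real.norm_of_nonneg hn]
    set g := 1 + ‖y‖ ^ 2 with hg
    have hg1 : 1 ≤ g := by rw [hg]; nlinarith [sq_nonneg ‖y‖]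
    have hg0 : 0 < g := by linarith
    have hlg : 0 ≤ Real.log g := Real.log_nonneg hg1
    have e1 : |Real.log (bubV N y ^ 2)| ≤ |Real.log (bubC N ^ 2)| + ((N : ℝ) - 2) * Real.log g := by
      rw [bubV_sq, Real.log_mul (by positivity) (by positivity), Real.log_rpow (by positivity)]
      refine (abs_add_le _ _).trans ?_
      rw [abs_mul, abs_neg, abs_of_pos h2, abs_of_nonneg hlg]
    have e2 : Real.log g ≤ 4 * g ^ (1 / 4 : ℝ) := by
      have := Real.log_le_rpow_div hg0.le (ε := 1 / 4) (by norm_num)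
      linarith
    have e3 : g ^ (-((N : ℝ) - 2 - 1 / 4)) = g ^ (1 / 4 : ℝ) * g ^ (-((N : ℝ) - 2)) := by
      rw [← Real.rpow_add hg0]; congr 1; ring
    simp only [Pi.add_apply, ← hg]
    rw [e3]
    have : bubV N y ^ 2 * (1 + |Real.log (bubV N y ^ 2)|) ≤ bubV N y ^ 2 *
      (1 + (|Real.log (bubC N ^ 2)| + ((N : ℝ) - 2) * (4 * g ^ (1 / 4 : ℝ)))) := by
      gcongr
      exact e1.trans (by gcongr)
    refine this.trans (le_of_eq ?_)
    rw [bubV_sq]; ring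

theorem bub_scale (N : ℕ) (Ω : Set (EuclideanSpace ℝ (Fin N))) (f : EuclideanSpace ℝ (Fin N) → ℝ)
    (hf : ∀ x, x ∉ Ω → f x = 0) (ε : ℝ) (hε : 0 < ε) :
    ∫ x in Ω, f x = ε ^ N * ∫ y, f (ε • y) := by
  rw [setIntegral_eq_integral_of_forall_compl_eq_zero hf, Measure.integral_comp_smul]
  simp only [finrank_euclideanSpace, Fintype.card_fin, smul_eq_mul]
  rw [abs_of_pos (by positivity)]
  field_simp

theorem bub_q_pos (N : ℕ) (hN : 5 ≤ N) :
    0 < ∫ y in Metric.closedBall (0 : EuclideanSpace ℝ (Fin N)) 1, bubV N y ^ 2 := by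
  rw [setIntegral_pos_iff_support_of_nonneg_ae]
  · have : Function.support (fun y => bubV N y ^ 2) = Set.univ := by
      ext y; simp [(bubV_pos N hN y).ne']
    rw [this, Set.univ_inter]
    exact Metric.measure_closedBall_pos _ _ (by norm_num)
  · exact Filter.Eventually.of_forall fun y => sq_nonneg _
  · exact (bub_int_sq N hN).integrableOn

theorem bub_scaled (N : ℕ) (ε : ℝ) (hε : 0 < ε) (x : EuclideanSpace ℝ (Fin N)) :
    bubC N * (ε / (ε ^ 2 + ‖x‖ ^ 2)) ^ (((N : ℝ) - 2) / 2) =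
      ε ^ (-(((N : ℝ) - 2) / 2)) * bubV N (ε⁻¹ • x) := by
  unfold bubV
  rw [norm_smul, norm_inv, Real.norm_of_nonneg hε.le]
  rw [mul_left_comm, ← Real.mul_rpow (by positivity) (by positivity), Real.rpow_neg (by positivity),
    ← Real.inv_rpow (by positivity)]
  congr 2
  field_simp

/-- gradient estimate for the rescaled function -/
theorem bub_grad (N : ℕ) (hN : 5 ≤ N) (φ : EuclideanSpace ℝ (Fin N) → ℝ) (hφd : Differentiable ℝ φ)
    (hφ01 : ∀ x, 0 ≤ φ x ∧ φ x ≤ 1) (L ρ : ℝ) (hρ : 0 < ρ) (hL : ∀ x, ‖fderiv ℝ φ x‖ ≤ L)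
    (hφ1 : ∀ x ∈ Metric.closedBall (0 : EuclideanSpace ℝ (Fin N)) ρ, φ x = 1)
    (ε : ℝ) (hε : 0 < ε) (y : EuclideanSpace ℝ (Fin N)) :
    ‖fderiv ℝ (fun y => φ (ε • y) * bubV N y) y‖ ^ 2 ≤
      ‖fderiv ℝ (bubV N) y‖ ^ 2 + (2 * ((N : ℝ) - 2) * (L / ρ) + L ^ 2) * ε ^ 2 * bubV N y ^ 2 := by
  have hNr : (5 : ℝ) ≤ N := by exact_mod_cast hN
  have hL0 : 0 ≤ L := (norm_nonneg _).trans (hL 0)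
  have hL' : ∀ x, ‖fderiv ℝ φ x‖ ≤ L / ρ * ‖x‖ := by
    intro x
    by_cases hx : ‖x‖ < ρ
    · have : φ =ᶠ[nhds x] fun _ => 1 := by
        have : Metric.ball (0 : EuclideanSpace ℝ (Fin N)) ρ ∈ nhds x :=
          Metric.isOpen_ball.mem_nhds (by simpa using hx)
        filter_upwards [this] with z hz
        exact hφ1 z (Metric.ball_subset_closedBall hz)
      rw [this.fderiv_eq]
      simp; positivity
    · push Not at hx
      calc ‖fderiv ℝ φ x‖ ≤ L := hL x
        _ = L / ρ * ρ := by field_simp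
        _ ≤ L / ρ * ‖x‖ := by gcongr
  have hV := bubV_pos N hN y
  have hψ : fderiv ℝ (fun y => φ (ε • y)) y = ε • fderiv ℝ φ (ε • y) := fderiv_comp_smul ε
  have hψd : DifferentiableAt ℝ (fun y => φ (ε • y)) y := by fun_prop
  have hfd : fderiv ℝ (fun y => φ (ε • y) * bubV N y) y =
      φ (ε • y) • fderiv ℝ (bubV N) y + bubV N y • (ε • fderiv ℝ φ (ε • y)) := by
    rw [← hψ]
    exact fderiv_fun_mul hψd (bubV_deriv N y).differentiableAt
  set G := ‖fderiv ℝ (bubV N) y‖ with hG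
  have hG0 : 0 ≤ G := norm_nonneg _
  set d := ‖fderiv ℝ φ (ε • y)‖ with hd
  have hd0 : 0 ≤ d := norm_nonneg _
  have h1 : ‖fderiv ℝ (fun y => φ (ε • y) * bubV N y) y‖ ≤ G + bubV N y * (ε * d) := by
    rw [hfd]
    refine (norm_add_le _ _).trans ?_
    rw [norm_smul, norm_smul, norm_smul, Real.norm_of_nonneg (hφ01 _).1, Real.norm_of_nonneg hV.le,
      Real.norm_of_nonneg hε.le]
    have := mul_le_of_le_one_left hG0 (hφ01 (ε • y)).2
    linarith
  have h2 : d ≤ L / ρ * (ε * ‖y‖) := by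
    have := hL' (ε • y)
    rwa [norm_smul, Real.norm_of_nonneg hε.le] at this
  have h3 : d ^ 2 ≤ L ^ 2 := pow_le_pow_left₀ hd0 (hL _) 2
  have h4 : G * ‖y‖ ≤ ((N : ℝ) - 2) * bubV N y := bubV_deriv_le N hN y
  have h5 : ‖fderiv ℝ (fun y => φ (ε • y) * bubV N y) y‖ ^ 2 ≤ (G + bubV N y * (ε * d)) ^ 2 :=
    pow_le_pow_left₀ (norm_nonneg _) h1 2
  have h6 : 2 * G * bubV N y * ε * d ≤ 2 * G * bubV N y * ε * (L / ρ * (ε * ‖y‖)) := by gcongr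
  have h7 : 2 * bubV N y * ε ^ 2 * (L / ρ) * (G * ‖y‖) ≤
      2 * bubV N y * ε ^ 2 * (L / ρ) * (((N : ℝ) - 2) * bubV N y) := by gcongr
  have h8 : bubV N y ^ 2 * ε ^ 2 * d ^ 2 ≤ bubV N y ^ 2 * ε ^ 2 * L ^ 2 := by gcongr
  linarith

theorem bub_grad_int (N : ℕ) (hN : 5 ≤ N) (φ : EuclideanSpace ℝ (Fin N) → ℝ)
    (hφd : Differentiable ℝ φ)
    (hφ01 : ∀ x, 0 ≤ φ x ∧ φ x ≤ 1) (L ρ : ℝ) (hρ : 0 < ρ) (hL : ∀ x, ‖fderiv ℝ φ x‖ ≤ L)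
    (hφ1 : ∀ x ∈ Metric.closedBall (0 : EuclideanSpace ℝ (Fin N)) ρ, φ x = 1)
    (ε : ℝ) (hε : 0 < ε) :
    ∫ y, ‖fderiv ℝ (fun y => φ (ε • y) * bubV N y) y‖ ^ 2 ≤
      (∫ y, ‖fderiv ℝ (bubV N) y‖ ^ 2) +
        ((2 * ((N : ℝ) - 2) * (L / ρ) + L ^ 2) * ∫ y, bubV N y ^ 2) * ε ^ 2 := by
  have i1 := bub_int_deriv N hN
  have i2 := (bub_int_sq N hN).const_mul ((2 * ((N : ℝ) - 2) * (L / ρ) + L ^ 2) * ε ^ 2)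
  calc _ ≤ ∫ y, (‖fderiv ℝ (bubV N) y‖ ^ 2 +
        (2 * ((N : ℝ) - 2) * (L / ρ) + L ^ 2) * ε ^ 2 * bubV N y ^ 2) := by
        refine integral_mono_of_nonneg (Filter.Eventually.of_forall fun y => sq_nonneg _) (i1.add i2)
          (Filter.Eventually.of_forall fun y => ?_)
        exact bub_grad N hN φ hφd hφ01 L ρ hρ hL hφ1 ε hε y
    _ = _ := by
        rw [integral_add i1 i2, integral_const_mul]; ring

theorem bub_P_lower (N : ℕ) (hN : 5 ≤ N) (φ : EuclideanSpace ℝ (Fin N) → ℝ)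
    (hφc : Continuous φ) (hφ01 : ∀ x, 0 ≤ φ x ∧ φ x ≤ 1) (ρ : ℝ) (hρ : 0 < ρ)
    (hφ1 : ∀ x ∈ Metric.closedBall (0 : EuclideanSpace ℝ (Fin N)) ρ, φ x = 1)
    (ε : ℝ) (hε : 0 < ε) :
    (∫ y, bubV N y ^ (2 * (N : ℝ) / ((N : ℝ) - 2))) -
      (1 / ρ ^ 2 * ∫ y, ‖y‖ ^ 2 * bubV N y ^ (2 * (N : ℝ) / ((N : ℝ) - 2))) * ε ^ 2 ≤
    ∫ y, φ (ε • y) ^ (2 * (N : ℝ) / ((N : ℝ) - 2)) * bubV N y ^ (2 * (N : ℝ) / ((N : ℝ) - 2)) := by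
  have hNr : (5 : ℝ) ≤ N := by exact_mod_cast hN
  have hN2 : 0 < (N : ℝ) - 2 := by linarith
  set p := 2 * (N : ℝ) / ((N : ℝ) - 2) with hp
  have hp0 : 0 < p := by positivity
  have i1 : Integrable (fun y => bubV N y ^ p) := bub_int_crit N hN
  have i2 : Integrable (fun y => ε ^ 2 / ρ ^ 2 * (‖y‖ ^ 2 * bubV N y ^ p)) :=
    (bub_int_crit2 N hN).const_mul _
  have i3 : Integrable (fun y => φ (ε • y) ^ p * bubV N y ^ p) := by
    refine i1.mono' ?_ (Filter.Eventually.of_forall fun y => ?_)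
    · apply Continuous.aestronglyMeasurable
      refine Continuous.mul ?_ ?_
      · exact Continuous.rpow_const (by fun_prop) fun y => Or.inr hp0.le
      · exact Continuous.rpow_const (bubV_cont N) fun y => Or.inr hp0.le
    · have := bubV_pos N hN y
      have h := hφ01 (ε • y)
      rw [Real.norm_of_nonneg (mul_nonneg (Real.rpow_nonneg h.1 _) (by positivity))]
      exact mul_le_of_le_one_left (by positivity) (Real.rpow_le_one h.1 h.2 hp0.le)
  calc _ = ∫ y, (bubV N y ^ p - ε ^ 2 / ρ ^ 2 * (‖y‖ ^ 2 * bubV N y ^ p)) := by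
        rw [integral_sub i1 i2, integral_const_mul]; ring
    _ ≤ _ := by
        refine integral_mono (i1.sub i2) i3 fun y => ?_
        have hV := bubV_pos N hN y
        have h := hφ01 (ε • y)
        have hVp : 0 ≤ bubV N y ^ p := by positivity
        have : 1 - ε ^ 2 / ρ ^ 2 * ‖y‖ ^ 2 ≤ φ (ε • y) ^ p := by
          by_cases hy : ‖ε • y‖ ≤ ρ
          · rw [hφ1 _ (by simpa using hy), Real.one_rpow]
            have : 0 ≤ ε ^ 2 / ρ ^ 2 * ‖y‖ ^ 2 := by positivity
            linarith
          · push Not at hy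
            rw [norm_smul, Real.norm_of_nonneg hε.le] at hy
            have : 1 ≤ ε ^ 2 / ρ ^ 2 * ‖y‖ ^ 2 := by
              rw [div_mul_eq_mul_div, le_div_iff₀ (by positivity)]
              nlinarith
            have := Real.rpow_nonneg h.1 p
            linarith
        have := mul_le_mul_of_nonneg_right this hVp
        simp only
        linarith

theorem bub_int_q (N : ℕ) (hN : 5 ≤ N) (φ : EuclideanSpace ℝ (Fin N) → ℝ)
    (hφc : Continuous φ) (hφ01 : ∀ x, 0 ≤ φ x ∧ φ x ≤ 1) (ε : ℝ) :
    Integrable (fun y => φ (ε • y) ^ 2 * bubV N y ^ 2) := by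
  refine (bub_int_sq N hN).mono' ?_ (Filter.Eventually.of_forall fun y => ?_)
  · apply Continuous.aestronglyMeasurable
    have := bubV_cont N
    fun_prop
  · have h := hφ01 (ε • y)
    rw [Real.norm_of_nonneg (by positivity)]
    exact mul_le_of_le_one_left (by positivity) (pow_le_one₀ h.1 h.2)

theorem bub_q_le (N : ℕ) (hN : 5 ≤ N) (φ : EuclideanSpace ℝ (Fin N) → ℝ)
    (hφc : Continuous φ) (hφ01 : ∀ x, 0 ≤ φ x ∧ φ x ≤ 1) (ε : ℝ) :
    ∫ y, φ (ε • y) ^ 2 * bubV N y ^ 2 ≤ ∫ y, bubV N y ^ 2 := by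
  refine integral_mono (bub_int_q N hN φ hφc hφ01 ε) (bub_int_sq N hN) fun y => ?_
  have h := hφ01 (ε • y)
  exact mul_le_of_le_one_left (by positivity) (pow_le_one₀ h.1 h.2)

theorem bub_q_ge (N : ℕ) (hN : 5 ≤ N) (φ : EuclideanSpace ℝ (Fin N) → ℝ)
    (hφc : Continuous φ) (hφ01 : ∀ x, 0 ≤ φ x ∧ φ x ≤ 1) (ρ : ℝ) 
    (hφ1 : ∀ x ∈ Metric.closedBall (0 : EuclideanSpace ℝ (Fin N)) ρ, φ x = 1)
    (ε : ℝ) (hε : 0 < ε) (hερ : ε ≤ ρ) :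
    ∫ y in Metric.closedBall (0 : EuclideanSpace ℝ (Fin N)) 1, bubV N y ^ 2 ≤
      ∫ y, φ (ε • y) ^ 2 * bubV N y ^ 2 := by
  calc _ = ∫ y in Metric.closedBall (0 : EuclideanSpace ℝ (Fin N)) 1, φ (ε • y) ^ 2 * bubV N y ^ 2 := by
        refine setIntegral_congr_fun measurableSet_closedBall fun y hy => ?_
        have : φ (ε • y) = 1 := by
          apply hφ1
          simp only [Metric.mem_closedBall, dist_zero_right, norm_smul, Real.norm_of_nonneg hε.le] at hy ⊢
          nlinarith
        simp [this]
    _ ≤ _ := setIntegral_le_integral (bub_int_q N hN φ hφc hφ01 ε)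
        (Filter.Eventually.of_forall fun y => by positivity)

theorem bub_log_lower (N : ℕ) (hN : 5 ≤ N) (φ : EuclideanSpace ℝ (Fin N) → ℝ)
    (hφc : Continuous φ) (hφs : HasCompactSupport φ) (hφ01 : ∀ x, 0 ≤ φ x ∧ φ x ≤ 1)
    (ε : ℝ) (hε : 0 < ε) (c : ℝ) (hc : 0 < c) :
    c ^ 2 * ((∫ y, φ (ε • y) ^ 2 * bubV N y ^ 2) * (Real.log (c ^ 2) - 1) -
      ∫ y, bubV N y ^ 2 * (1 + |Real.log (bubV N y ^ 2)|)) ≤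
    ∫ y, (c * (φ (ε • y) * bubV N y)) ^ 2 * (Real.log ((c * (φ (ε • y) * bubV N y)) ^ 2) - 1) := by
  have i1 := bub_int_q N hN φ hφc hφ01 ε
  have i2 := bub_int_log N hN
  have hVc := bubV_cont N
  have i3 : Integrable (fun y => (c * (φ (ε • y) * bubV N y)) ^ 2 *
      (Real.log ((c * (φ (ε • y) * bubV N y)) ^ 2) - 1)) := by
    apply Continuous.integrable_of_hasCompactSupport
    · have h1 : Continuous fun y => (c * (φ (ε • y) * bubV N y)) ^ 2 := by fun_prop
      have := (Real.continuous_mul_log.comp h1).sub h1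
      convert this using 2 with y
      simp [mul_sub]
    · have : HasCompactSupport fun y => φ (ε • y) := by
        exact hφs.comp_smul hε.ne'
      refine this.mono fun y hy => ?_
      simp only [Function.mem_support] at hy ⊢
      contrapose! hy
      simp [hy]
  calc _ = ∫ y, (c ^ 2 * (Real.log (c ^ 2) - 1) * (φ (ε • y) ^ 2 * bubV N y ^ 2) -
        c ^ 2 * (bubV N y ^ 2 * (1 + |Real.log (bubV N y ^ 2)|))) := by
        rw [integral_sub (i1.const_mul _) (i2.const_mul _), integral_const_mul, integral_const_mul]; ring
    _ ≤ _ := by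
        refine integral_mono ((i1.const_mul _).sub (i2.const_mul _)) i3 fun y => ?_
        have hV := bubV_pos N hN y
        obtain ⟨h0, h1⟩ := hφ01 (ε • y)
        simp only
        set a := φ (ε • y)
        set V := bubV N y
        have habs : 0 ≤ |Real.log (V ^ 2)| := abs_nonneg _
        rcases h0.eq_or_lt with h0 | h0
        · rw [← h0]
          have : 0 ≤ c ^ 2 * (V ^ 2 * (1 + |Real.log (V ^ 2)|)) := by positivity
          simpa using this
        · have e : (c * (a * V)) ^ 2 = c ^ 2 * (a ^ 2 * V ^ 2) := by ring
          rw [e, Real.log_mul (by positivity) (by positivity), Real.log_mul (by positivity) (by positivity)]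
          have ha2 : a ^ 2 ≤ 1 := pow_le_one₀ h0.le h1
          have hz : -1 ≤ a ^ 2 * Real.log (a ^ 2) := by
            have hp : 0 < a ^ 2 := by positivity
            have := Real.one_sub_inv_le_log_of_pos hp
            have h3 := mul_le_mul_of_nonneg_left this hp.le
            rw [mul_sub, mul_inv_cancel₀ hp.ne'] at h3
            linarith
          have hz2 : -|Real.log (V ^ 2)| ≤ a ^ 2 * Real.log (V ^ 2) := by
            have := neg_abs_le (Real.log (V ^ 2))
            nlinarith [sq_nonneg a]
          have : 0 ≤ c ^ 2 * V ^ 2 * ((a ^ 2 * Real.log (a ^ 2) + 1) +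
            (a ^ 2 * Real.log (V ^ 2) + |Real.log (V ^ 2)|)) := by
            apply mul_nonneg (by positivity); linarith
          linarith


/-- Lemma 3.3: for `N ≥ 5`, `λ ∈ ℝ`, `μ > 0`, there is `ε₀ > 0` such that
`I(t U_ε) < K_N/N = (1/N) S^{N/2}` for all `ε ∈ (0, ε₀)` and `t ≥ 0`, where
`U_ε = φ u_ε` and `I` is the energy functional of the problem
`-Δu = |u|^{2*-2}u + λu + μ u log u²` (with `2* = 2N/(N-2)`, `1/2* = (N-2)/(2N)`). -/
theorem stmt_17 (N : ℕ) (hN : 5 ≤ N) (lam μ : ℝ) (hμ : 0 < μ)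
    (u : ℝ → EuclideanSpace ℝ (Fin N) → ℝ)
    (hu : ∀ ε : ℝ, 0 < ε → ∀ x : EuclideanSpace ℝ (Fin N),
      u ε x = ((N : ℝ) * ((N : ℝ) - 2)) ^ (((N : ℝ) - 2) / 4) *
        (ε / (ε ^ 2 + ‖x‖ ^ 2)) ^ (((N : ℝ) - 2) / 2))
    (Ω : Set (EuclideanSpace ℝ (Fin N))) (hΩo : IsOpen Ω)
    (hΩb : Bornology.IsBounded Ω) (h0Ω : (0 : EuclideanSpace ℝ (Fin N)) ∈ Ω)
    (φ : EuclideanSpace ℝ (Fin N) → ℝ) (hφs : ContDiff ℝ (⊤ : ℕ∞) φ)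
    (hφc : HasCompactSupport φ) (hφΩ : tsupport φ ⊆ Ω)
    (hφ01 : ∀ x, 0 ≤ φ x ∧ φ x ≤ 1)
    (ρ : ℝ) (hρ : 0 < ρ) (hball : Metric.closedBall 0 ρ ⊆ Ω)
    (hφ1 : ∀ x ∈ Metric.closedBall (0 : EuclideanSpace ℝ (Fin N)) ρ, φ x = 1)
    (I : (EuclideanSpace ℝ (Fin N) → ℝ) → ℝ)
    (hI : ∀ v : EuclideanSpace ℝ (Fin N) → ℝ,
      I v = (1 / 2) * (∫ x in Ω, ‖fderiv ℝ v x‖ ^ 2) -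
        (((N : ℝ) - 2) / (2 * (N : ℝ))) *
          (∫ x in Ω, (max (v x) 0) ^ (2 * (N : ℝ) / ((N : ℝ) - 2))) -
        (lam / 2) * (∫ x in Ω, (max (v x) 0) ^ 2) -
        (μ / 2) * (∫ x in Ω, (max (v x) 0) ^ 2 * (Real.log ((max (v x) 0) ^ 2) - 1))) :
    ∃ ε₀ : ℝ, 0 < ε₀ ∧ ∀ ε ∈ Set.Ioo (0 : ℝ) ε₀, ∀ t : ℝ, 0 ≤ t →
      I (fun x => t * (φ x * u ε x)) <
        (∫ x : EuclideanSpace ℝ (Fin N), ‖fderiv ℝ (u 1) x‖ ^ 2) / (N : ℝ) := by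
  have hNr : (5 : ℝ) ≤ N := by exact_mod_cast hN
  have hN2 : 0 < (N : ℝ) - 2 := by linarith
  have hφd : Differentiable ℝ φ := hφs.differentiable (by simp)
  have hφcont : Continuous φ := hφs.continuous
  have hu1 : u 1 = bubV N := by
    funext x
    rw [hu 1 one_pos x]
    have := bub_scaled N 1 one_pos x
    simpa [bubC] using this
  obtain ⟨L, hL⟩ : ∃ L, ∀ x, ‖fderiv ℝ φ x‖ ≤ L :=
    (hφc.fderiv ℝ).exists_bound_of_continuous (hφs.continuous_fderiv (by simp))
  have hL0 : 0 ≤ L := (norm_nonneg _).trans (hL 0)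
  have hQ0 : 0 ≤ ∫ y, bubV N y ^ 2 := integral_nonneg fun y => sq_nonneg _
  have hP2 : 0 ≤ ∫ y, ‖y‖ ^ 2 * bubV N y ^ (2 * (N : ℝ) / ((N : ℝ) - 2)) :=
    integral_nonneg fun y => mul_nonneg (sq_nonneg _) (Real.rpow_nonneg (bubV_pos N hN y).le _)
  have hK : 0 < ∫ y, ‖fderiv ℝ (bubV N) y‖ ^ 2 := by
    rw [bub_K_eq N hN]
    refine bub_integral_pos N _ ?_ (fun y => Real.rpow_pos_of_pos (bubV_pos N hN y) _) (bub_int_crit N hN)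
    exact (bubV_cont N).rpow_const fun y => Or.inl (bubV_pos N hN y).ne'
  rw [hu1]
  obtain ⟨ε₀, hε₀, hε₀ρ, H⟩ := bub_real N hNr lam μ hμ (∫ y, ‖fderiv ℝ (bubV N) y‖ ^ 2)
    ((2 * ((N : ℝ) - 2) * (L / ρ) + L ^ 2) * ∫ y, bubV N y ^ 2)
    (1 / ρ ^ 2 * ∫ y, ‖y‖ ^ 2 * bubV N y ^ (2 * (N : ℝ) / ((N : ℝ) - 2)))
    (∫ y in Metric.closedBall (0 : EuclideanSpace ℝ (Fin N)) 1, bubV N y ^ 2)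
    (∫ y, bubV N y ^ 2) (∫ y, bubV N y ^ 2 * (1 + |Real.log (bubV N y ^ 2)|))
    hK (by positivity) (by positivity) (bub_q_pos N hN)
    (setIntegral_le_integral (bub_int_sq N hN) (Filter.Eventually.of_forall fun y => sq_nonneg _))
    (integral_nonneg fun y => mul_nonneg (sq_nonneg _) (add_nonneg zero_le_one (abs_nonneg _))) ρ hρ
  refine ⟨ε₀, hε₀, fun ε hε t ht => ?_⟩
  have he0 : 0 < ε := hε.1
  have hεN : 0 < ε ^ N := by positivity
  -- the scaling factor
  obtain ⟨κ, hκdef⟩ : ∃ κ : ℝ, κ = ε ^ (-(((N : ℝ) - 2) / 2)) := ⟨_, rfl⟩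
  have hκ : 0 < κ := by rw [hκdef]; positivity
  have hκ2 : ε ^ N * κ ^ 2 = ε ^ 2 := by
    rw [hκdef, ← Real.rpow_natCast (_ ^ (-(((N : ℝ) - 2) / 2))), ← Real.rpow_mul he0.le, ← Real.rpow_natCast ε N,
      ← Real.rpow_add he0, ← Real.rpow_natCast ε 2]
    congr 1; push_cast; ring
  have hκp : ε ^ N * κ ^ (2 * (N : ℝ) / ((N : ℝ) - 2)) = 1 := by
    rw [hκdef, ← Real.rpow_mul he0.le, ← Real.rpow_natCast ε N, ← Real.rpow_add he0]
    rw [← Real.rpow_zero ε]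
    congr 1; field_simp; ring
  have hκlog : Real.log (κ ^ 2) = ((N : ℝ) - 2) * Real.log (1 / ε) := by
    rw [hκdef, Real.log_pow, Real.log_rpow he0, one_div, Real.log_inv]; push_cast; ring
  set U : EuclideanSpace ℝ (Fin N) → ℝ := fun x => t * (φ x * u ε x) with hU
  have hUx : ∀ x, U x = t * κ * (φ x * bubV N (ε⁻¹ • x)) := by
    intro x
    have := bub_scaled N ε he0 x
    rw [← hκdef] at this
    simp only [hU, hu ε he0 x]
    rw [show ((N : ℝ) * ((N : ℝ) - 2)) ^ (((N : ℝ) - 2) / 4) = bubC N from rfl, this]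
    ring
  have hUy : ∀ y, U (ε • y) = t * κ * (φ (ε • y) * bubV N y) := by
    intro y; rw [hUx, smul_smul, inv_mul_cancel₀ he0.ne', one_smul]
  have hUy0 : ∀ y, 0 ≤ U (ε • y) := by
    intro y
    rw [hUy]
    exact mul_nonneg (by positivity) (mul_nonneg (hφ01 _).1 (bubV_pos N hN y).le)
  have hU0 : ∀ x, x ∉ Ω → U x = 0 := by
    intro x hx
    have : φ x = 0 := image_eq_zero_of_notMem_tsupport fun h => hx (hφΩ h)
    simp [hU, this]
  have hp0 : 2 * (N : ℝ) / ((N : ℝ) - 2) ≠ 0 := by positivity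
  -- gradient term
  have T1 : ∫ x in Ω, ‖fderiv ℝ U x‖ ^ 2 =
      t ^ 2 * ∫ y, ‖fderiv ℝ (fun y => φ (ε • y) * bubV N y) y‖ ^ 2 := by
    rw [bub_scale N Ω _ _ ε he0]
    · have hd : ∀ y, ‖fderiv ℝ U (ε • y)‖ ^ 2 =
          (t * κ * ε⁻¹) ^ 2 * ‖fderiv ℝ (fun y => φ (ε • y) * bubV N y) y‖ ^ 2 := by
        intro y
        have e1 : fderiv ℝ (fun y => U (ε • y)) y = ε • fderiv ℝ U (ε • y) := fderiv_comp_smul ε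
        have e2 : fderiv ℝ (fun y => U (ε • y)) y =
            (t * κ) • fderiv ℝ (fun y => φ (ε • y) * bubV N y) y := by
          rw [funext hUy]
          refine fderiv_const_mul ?_ _
          have : DifferentiableAt ℝ (fun y => φ (ε • y)) y := by fun_prop
          exact this.mul (bubV_deriv N y).differentiableAt
        have e3 : fderiv ℝ U (ε • y) =
            (t * κ * ε⁻¹) • fderiv ℝ (fun y => φ (ε • y) * bubV N y) y := by
          rw [mul_comm (t * κ), mul_smul, ← e2, e1, smul_smul, inv_mul_cancel₀ he0.ne', one_smul]
        rw [e3, norm_smul, mul_pow, Real.norm_eq_abs, sq_abs]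
      simp only [hd]
      rw [integral_const_mul, ← mul_assoc]
      congr 1
      calc ε ^ N * (t * κ * ε⁻¹) ^ 2 = t ^ 2 * (ε ^ N * κ ^ 2) * (ε⁻¹) ^ 2 := by ring
        _ = t ^ 2 := by rw [hκ2]; field_simp
    · intro x hx
      have : x ∉ tsupport U := fun h => hx (hφΩ (tsupport_mul_subset_left (f := φ) (g := u ε)
        (tsupport_mul_subset_right (f := fun _ => t) (g := fun x => φ x * u ε x) h)))
      rw [fderiv_of_notMem_tsupport ℝ this]; simp
  have T2 : ∫ x in Ω, (max (U x) 0) ^ (2 * (N : ℝ) / ((N : ℝ) - 2)) =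
      (t ^ 2) ^ ((N : ℝ) / ((N : ℝ) - 2)) * ∫ y, φ (ε • y) ^ (2 * (N : ℝ) / ((N : ℝ) - 2)) *
        bubV N y ^ (2 * (N : ℝ) / ((N : ℝ) - 2)) := by
    rw [bub_scale N Ω _ _ ε he0]
    · have hd : ∀ y, (max (U (ε • y)) 0) ^ (2 * (N : ℝ) / ((N : ℝ) - 2)) =
          (t ^ (2 * (N : ℝ) / ((N : ℝ) - 2)) * κ ^ (2 * (N : ℝ) / ((N : ℝ) - 2))) *
          (φ (ε • y) ^ (2 * (N : ℝ) / ((N : ℝ) - 2)) * bubV N y ^ (2 * (N : ℝ) / ((N : ℝ) - 2))) := by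
        intro y
        have hV := bubV_pos N hN y
        have h := (hφ01 (ε • y)).1
        rw [max_eq_left (hUy0 y), hUy, Real.mul_rpow (by positivity) (by positivity),
          Real.mul_rpow ht hκ.le, Real.mul_rpow h hV.le]
      simp only [hd]
      rw [integral_const_mul, ← mul_assoc]
      congr 1
      rw [mul_left_comm, hκp, mul_one, ← Real.rpow_natCast t 2, ← Real.rpow_mul ht]
      congr 1; push_cast; ring
    · intro x hx
      rw [hU0 x hx, max_self, Real.zero_rpow hp0]
  have T3 : ∫ x in Ω, (max (U x) 0) ^ 2 =
      t ^ 2 * ε ^ 2 * ∫ y, φ (ε • y) ^ 2 * bubV N y ^ 2 := by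
    rw [bub_scale N Ω _ _ ε he0]
    · have hd : ∀ y, (max (U (ε • y)) 0) ^ 2 = (t ^ 2 * κ ^ 2) * (φ (ε • y) ^ 2 * bubV N y ^ 2) := by
        intro y
        rw [max_eq_left (hUy0 y), hUy]; ring
      simp only [hd]
      rw [integral_const_mul, ← mul_assoc]
      congr 1
      rw [← hκ2]; ring
    · intro x hx
      simp [hU0 x hx]
  have T4 : ε ^ 2 * t ^ 2 * ((∫ y, φ (ε • y) ^ 2 * bubV N y ^ 2) *
      (((N : ℝ) - 2) * Real.log (1 / ε) + Real.log (t ^ 2) - 1) -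
        ∫ y, bubV N y ^ 2 * (1 + |Real.log (bubV N y ^ 2)|)) ≤
      ∫ x in Ω, (max (U x) 0) ^ 2 * (Real.log ((max (U x) 0) ^ 2) - 1) := by
    rcases ht.eq_or_lt with h0 | h0
    · have : ∀ x, U x = 0 := fun x => by simp [hU, ← h0]
      simp [this, ← h0]
    · rw [bub_scale N Ω _ _ ε he0]
      · have := bub_log_lower N hN φ hφcont hφc hφ01 ε he0 (t * κ) (by positivity)
        have h2 := mul_le_mul_of_nonneg_left this hεN.le
        have hmax : ∀ y, max (U (ε • y)) 0 = t * κ * (φ (ε • y) * bubV N y) := fun y => by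
          rw [max_eq_left (hUy0 y), hUy]
        simp only [hmax]
        refine le_trans (le_of_eq ?_) h2
        rw [mul_pow, Real.log_mul (by positivity) (by positivity), hκlog, ← hκ2]
        ring
      · intro x hx
        simp [hU0 x hx]
  have hG := bub_grad_int N hN φ hφd hφ01 L ρ hρ hL hφ1 ε he0
  have hP := bub_P_lower N hN φ hφcont hφ01 ρ hρ hφ1 ε he0
  rw [← bub_K_eq N hN] at hP
  have hfin := H ε hε (t ^ 2) _ _ (sq_nonneg t)
    (integral_nonneg fun y => mul_nonneg (Real.rpow_nonneg (hφ01 _).1 _)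
      (Real.rpow_nonneg (bubV_pos N hN y).le _)) hP
    (bub_q_ge N hN φ hφcont hφ01 ρ hφ1 ε he0 (hε.2.le.trans hε₀ρ))
    (bub_q_le N hN φ hφcont hφ01 ε)
  rw [hI U, T1, T2, T3]
  refine lt_of_le_of_lt ?_ hfin
  have h1 := mul_le_mul_of_nonneg_left hG (by positivity : 0 ≤ t ^ 2 / 2)
  have h2 := mul_le_mul_of_nonneg_left T4 (by positivity : 0 ≤ μ / 2)
  linarith
end

section
/- Let N = 4, λ ∈ ℝ and μ > 0, and let Ω ⊂ ℝ⁴ be a bounded open set with 0 ∈ Ω. For every ρ ∈ (0,1] satisfying 8^μ > 25^μ·e^{2μ−λ}·ρ^{2μ} and with the closed ball B_{2ρ}(0) contained in Ω, and for every radial cutoff ψ and U_ε as in the context, there exists ε₀ > 0 such that for every ε ∈ (0, ε₀) and every t ≥ 0, I(t·U_ε) < K₄ / 4, where K₄ = ∫_{ℝ⁴} |∇u_1(x)|² dx. -/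
open MeasureTheory

noncomputable def bub (ε r : ℝ) : ℝ := Real.sqrt 8 * ε / (ε ^ 2 + r ^ 2)

noncomputable def kap : ℝ := 4 * volume.real (Metric.ball (0 : EuclideanSpace ℝ (Fin 4)) 1)

lemma kap_pos : 0 < kap := by
  unfold kap
  have : 0 < volume.real (Metric.ball (0 : EuclideanSpace ℝ (Fin 4)) 1) :=
    ENNReal.toReal_pos (Metric.measure_ball_pos _ _ one_pos).ne' measure_ball_lt_top.ne
  positivity

lemma radial_full (f : ℝ → ℝ) :
    ∫ x : EuclideanSpace ℝ (Fin 4), f ‖x‖ = kap * ∫ r in Set.Ioi (0 : ℝ), r ^ 3 * f r := by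
  rw [integral_fun_norm_addHaar volume f]
  simp [kap, mul_assoc]

lemma radial_set (f : ℝ → ℝ) (R : ℝ) (hR : 0 ≤ R) (hf : ∀ r, R < r → f r = 0)
    (Ω : Set (EuclideanSpace ℝ (Fin 4)))
    (hball : Metric.closedBall (0 : EuclideanSpace ℝ (Fin 4)) R ⊆ Ω) :
    ∫ x in Ω, f ‖x‖ = kap * ∫ r in (0 : ℝ)..R, r ^ 3 * f r := by
  rw [setIntegral_eq_integral_of_forall_compl_eq_zero, radial_full,
    intervalIntegral.integral_of_le hR]
  · congr 1
    refine setIntegral_eq_of_subset_of_forall_sdiff_eq_zero measurableSet_Ioi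
      (fun x hx => hx.1) ?_
    rintro x ⟨h1, h2⟩
    have : R < x := by
      by_contra h
      exact h2 ⟨h1, not_lt.1 h⟩
    simp [hf x this]
  · intro x hx
    apply hf
    by_contra h
    exact hx (hball (by simpa using h))

lemma fderiv_radial (g : ℝ → ℝ) (hg : Differentiable ℝ g) (x : EuclideanSpace ℝ (Fin 4))
    (hx : x ≠ 0) :
    ‖fderiv ℝ (fun y : EuclideanSpace ℝ (Fin 4) => g ‖y‖) x‖ ^ 2 = (deriv g ‖x‖) ^ 2 := by
  have h1 : DifferentiableAt ℝ (fun y : EuclideanSpace ℝ (Fin 4) => ‖y‖) x :=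
    (contDiffAt_norm ℝ hx).differentiableAt (n := 1) one_ne_zero
  have h2 := (hg ‖x‖).hasDerivAt.comp_hasFDerivAt x h1.hasFDerivAt
  have h3 : fderiv ℝ (fun y : EuclideanSpace ℝ (Fin 4) => g ‖y‖) x = _ := h2.fderiv
  rw [h3, norm_smul, norm_fderiv_norm h1, mul_one, Real.norm_eq_abs, sq_abs]

lemma ae_ne : ∀ᵐ x : EuclideanSpace ℝ (Fin 4), x ≠ 0 := by
  simp [ae_iff]

lemma bub_deriv (ε r : ℝ) (hε : 0 < ε) :
    HasDerivAt (bub ε) (-(Real.sqrt 8 * ε * (2 * r)) / (ε ^ 2 + r ^ 2) ^ 2) r := by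
  unfold bub
  have h : ε ^ 2 + r ^ 2 ≠ 0 := by positivity
  have h1 : HasDerivAt (fun r : ℝ => ε ^ 2 + r ^ 2) (2 * r) r := by
    simpa using (hasDerivAt_pow 2 r).const_add (ε ^ 2)
  refine HasDerivAt.congr_deriv ((hasDerivAt_const r (Real.sqrt 8 * ε)).div h1 h) ?_
  ring

lemma bub_deriv_sq (ε r : ℝ) (hε : 0 < ε) :
    (deriv (bub ε) r) ^ 2 = 32 * ε ^ 2 * r ^ 2 / (ε ^ 2 + r ^ 2) ^ 4 := by
  rw [(bub_deriv ε r hε).deriv, div_pow, neg_sq, mul_pow, mul_pow, Real.sq_sqrt (by norm_num)]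
  ring

lemma bub_sq (ε r : ℝ) :
    (bub ε r) ^ 2 = 8 * ε ^ 2 / (ε ^ 2 + r ^ 2) ^ 2 := by
  rw [bub, div_pow, mul_pow, Real.sq_sqrt (by norm_num)]

lemma q_deriv (ε r : ℝ) (hε : 0 < ε) :
    HasDerivAt (fun r : ℝ => r ^ 2 / (ε ^ 2 + r ^ 2)) (2 * r * ε ^ 2 / (ε ^ 2 + r ^ 2) ^ 2) r := by
  have h : ε ^ 2 + r ^ 2 ≠ 0 := by positivity
  have h0 : HasDerivAt (fun r : ℝ => r ^ 2) (2 * r) r := by simpa using hasDerivAt_pow 2 r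
  have h1 : HasDerivAt (fun r : ℝ => ε ^ 2 + r ^ 2) (2 * r) r := h0.const_add (ε ^ 2)
  refine HasDerivAt.congr_deriv (h0.div h1 h) ?_
  ring

lemma gradPrim (ε r : ℝ) (hε : 0 < ε) :
    HasDerivAt (fun r : ℝ => 16 / 3 * (r ^ 2 / (ε ^ 2 + r ^ 2)) ^ 3)
      (r ^ 3 * (32 * ε ^ 2 * r ^ 2 / (ε ^ 2 + r ^ 2) ^ 4)) r := by
  have h : ε ^ 2 + r ^ 2 ≠ 0 := by positivity
  refine HasDerivAt.congr_deriv (((q_deriv ε r hε).pow 3).const_mul (16 / 3 : ℝ)) ?_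
  norm_num only [Nat.add_one_sub_one, pow_one]
  push_cast
  field_simp
  ring

lemma fourPrim (ε r : ℝ) (hε : 0 < ε) :
    HasDerivAt (fun r : ℝ => 16 * (r ^ 2 / (ε ^ 2 + r ^ 2)) ^ 2
        - 32 / 3 * (r ^ 2 / (ε ^ 2 + r ^ 2)) ^ 3)
      (r ^ 3 * (64 * ε ^ 4 / (ε ^ 2 + r ^ 2) ^ 4)) r := by
  have h : ε ^ 2 + r ^ 2 ≠ 0 := by positivity
  refine HasDerivAt.congr_deriv ((((q_deriv ε r hε).pow 2).const_mul (16 : ℝ)).sub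
    (((q_deriv ε r hε).pow 3).const_mul (32 / 3 : ℝ))) ?_
  norm_num only [Nat.add_one_sub_one, pow_one]
  push_cast
  field_simp
  ring

lemma K_eq : ∫ x : EuclideanSpace ℝ (Fin 4), ‖fderiv ℝ (fun y : EuclideanSpace ℝ (Fin 4) => bub 1 ‖y‖) x‖ ^ 2
    = kap * (16 / 3) := by
  have h1 : ∫ x : EuclideanSpace ℝ (Fin 4), ‖fderiv ℝ (fun y : EuclideanSpace ℝ (Fin 4) => bub 1 ‖y‖) x‖ ^ 2
      = ∫ x : EuclideanSpace ℝ (Fin 4), (deriv (bub 1) ‖x‖) ^ 2 := by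
    apply integral_congr_ae
    filter_upwards [ae_ne] with x hx
    exact fderiv_radial (bub 1) (fun r => (bub_deriv 1 r one_pos).differentiableAt) x hx
  rw [h1, radial_full (fun r => (deriv (bub 1) r) ^ 2)]
  congr 1
  simp_rw [bub_deriv_sq 1 _ one_pos]
  have := integral_Ioi_of_hasDerivAt_of_nonneg' (a := 0) (l := 16 / 3)
    (fun x _ => gradPrim 1 x one_pos) (fun x hx => by have : 0 < x := hx; positivity) ?_
  · rw [this]; simp
  · have h2 : Filter.Tendsto (fun r : ℝ => 1 - (1 + r ^ 2)⁻¹) Filter.atTop (nhds (1 - 0)) := by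
      refine tendsto_const_nhds.sub (Filter.Tendsto.inv_tendsto_atTop ?_)
      exact Filter.tendsto_atTop_add_const_left _ _ (Filter.tendsto_pow_atTop two_ne_zero)
    have h3 := (h2.pow 3).const_mul (16 / 3 : ℝ)
    simp only [sub_zero, one_pow, mul_one] at h3
    refine h3.congr fun r => ?_
    have : (1 : ℝ) + r ^ 2 ≠ 0 := by positivity
    field_simp
    ring

lemma c_prim (ε r : ℝ) (hε : 0 < ε) :
    HasDerivAt (fun r : ℝ => 4 * ε ^ 2 * (Real.log (ε ^ 2 + r ^ 2) + ε ^ 2 / (ε ^ 2 + r ^ 2)))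
      (r ^ 3 * (8 * ε ^ 2 / (ε ^ 2 + r ^ 2) ^ 2)) r := by
  have h : ε ^ 2 + r ^ 2 ≠ 0 := by positivity
  have h1 : HasDerivAt (fun r : ℝ => ε ^ 2 + r ^ 2) (2 * r) r := by
    simpa using (hasDerivAt_pow 2 r).const_add (ε ^ 2)
  refine HasDerivAt.congr_deriv (((h1.log h).add ((hasDerivAt_const r (ε ^ 2)).div h1 h)).const_mul (4 * ε ^ 2)) ?_
  field_simp
  ring

lemma g_prim (ε r E μ : ℝ) (hε : 0 < ε) :
    HasDerivAt (fun r : ℝ => 4 * ε ^ 2 * (E * (Real.log (ε ^ 2 + r ^ 2) + ε ^ 2 / (ε ^ 2 + r ^ 2))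
        - μ * Real.log (ε ^ 2 + r ^ 2) ^ 2
        - 2 * μ * (ε ^ 2 * (Real.log (ε ^ 2 + r ^ 2) + 1) / (ε ^ 2 + r ^ 2))))
      (r ^ 3 * (8 * ε ^ 2 / (ε ^ 2 + r ^ 2) ^ 2 * (E - 2 * μ * Real.log (ε ^ 2 + r ^ 2)))) r := by
  have h : ε ^ 2 + r ^ 2 ≠ 0 := by positivity
  have h1 : HasDerivAt (fun r : ℝ => ε ^ 2 + r ^ 2) (2 * r) r := by
    simpa using (hasDerivAt_pow 2 r).const_add (ε ^ 2)
  have h2 := h1.log h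
  refine HasDerivAt.congr_deriv ((((((h2.add ((hasDerivAt_const r (ε ^ 2)).div h1 h)).const_mul E).sub
    ((h2.pow 2).const_mul μ)).sub
    ((((h2.add_const 1).const_mul (ε ^ 2)).div h1 h).const_mul (2 * μ))).const_mul (4 * ε ^ 2))) ?_
  field_simp
  ring

lemma hyp_log (lam μ ρ : ℝ) (hμ : 0 < μ) (hρ : 0 < ρ)
    (h : (8 : ℝ) ^ μ > (25 : ℝ) ^ μ * Real.exp (2 * μ - lam) * ρ ^ (2 * μ)) :
    3 * μ ≤ lam - 2 * μ + μ * Real.log 8 - 2 * μ * Real.log ρ := by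
  have h1 := Real.log_lt_log (by positivity) h
  rw [Real.log_mul (by positivity) (by positivity), Real.log_mul (by positivity) (by positivity),
    Real.log_exp, Real.log_rpow (by norm_num), Real.log_rpow hρ, Real.log_rpow (by norm_num)] at h1
  have h2 : (3 : ℝ) ≤ Real.log 25 := by
    rw [Real.le_log_iff_exp_le (by norm_num)]
    have : Real.exp 3 = Real.exp 1 ^ 3 := by rw [← Real.exp_nat_mul]; norm_num
    rw [this]
    have h3 := Real.exp_one_lt_d9
    calc Real.exp 1 ^ 3 ≤ 2.7182818286 ^ 3 := by gcongr
      _ ≤ 25 := by norm_num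
  nlinarith

lemma final_alg (k x y M B s : ℝ) (hk : k = 16 / 3) (hx : 0 < x) (hx' : x < 16 / 324)
    (hy : 0 ≤ y) (hy' : y ≤ 16 * x) (hM : M ≤ k - 2 * x - y) (hB : k - x ≤ B) (hs : 0 ≤ s) :
    y / 2 + s * M / 2 - s ^ 2 * B / 4 < k / 4 := by
  have hB0 : 0 < B := by linarith
  set N := k - 2 * x - y with hN
  have h1 : N ^ 2 < (k - x) * (k - 2 * y) := by
    have : (2 * x + y) ^ 2 ≤ (18 * x) ^ 2 := by
      gcongr; linarith
    rw [hN]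
    nlinarith [mul_nonneg hx.le hy, mul_pos hx (sub_pos.2 hx')]
  have h2 : (k - x) * (k - 2 * y) ≤ B * (k - 2 * y) := by
    apply mul_le_mul_of_nonneg_right hB; linarith
  have h3 : 0 < B * (k - 2 * y - 2 * s * N + s ^ 2 * B) := by
    nlinarith [sq_nonneg (s * B - N)]
  have h4 := pos_of_mul_pos_right h3 hB0.le
  nlinarith [mul_le_mul_of_nonneg_left hM hs]

lemma bub_cont (ε : ℝ) (hε : 0 < ε) : Continuous (bub ε) := by
  unfold bub
  exact continuous_const.div (by fun_prop) (fun r => by positivity)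

lemma phi_hasDeriv (ψ : ℝ → ℝ)
    (hψs : ContDiff ℝ (⊤ : ℕ∞) ψ) (ε : ℝ) (hε : 0 < ε) (r : ℝ) :
    HasDerivAt (fun r => ψ r * bub ε r) (deriv ψ r * bub ε r + ψ r * deriv (bub ε) r) r :=
  ((hψs.differentiable (by simp)) r).hasDerivAt.mul (bub_deriv ε r hε).differentiableAt.hasDerivAt

lemma bub_sq_le (ε r : ℝ) (hε : 0 < ε) (hr : 0 < r) : (bub ε r) ^ 2 ≤ 8 * ε ^ 2 / r ^ 4 := by
  rw [bub_sq]
  apply div_le_div_of_nonneg_left (by positivity) (by positivity)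
  nlinarith [sq_nonneg ε, sq_nonneg r, mul_nonneg (sq_nonneg ε) (sq_nonneg r), sq_nonneg (ε^2)]

lemma bub_deriv_sq_le (ε r : ℝ) (hε : 0 < ε) (hr : 0 < r) :
    (deriv (bub ε) r) ^ 2 ≤ 32 * ε ^ 2 / r ^ 6 := by
  rw [bub_deriv_sq ε r hε]
  calc 32 * ε ^ 2 * r ^ 2 / (ε ^ 2 + r ^ 2) ^ 4 ≤ 32 * ε ^ 2 * r ^ 2 / (r ^ 2) ^ 4 := by
        gcongr
        nlinarith [sq_nonneg ε]
    _ = 32 * ε ^ 2 / r ^ 6 := by field_simp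

lemma dphi_cont (ψ : ℝ → ℝ)
    (hψs : ContDiff ℝ (⊤ : ℕ∞) ψ) (ε : ℝ) (hε : 0 < ε) : Continuous (deriv (fun r => ψ r * bub ε r)) := by
  have h0 : deriv (fun r => ψ r * bub ε r)
      = fun r => deriv ψ r * bub ε r + ψ r * deriv (bub ε) r :=
    funext fun r => (phi_hasDeriv ψ hψs ε hε r).deriv
  rw [h0]
  have h1 : deriv (bub ε) = fun r => -(Real.sqrt 8 * ε * (2 * r)) / (ε ^ 2 + r ^ 2) ^ 2 :=
    funext fun r => (bub_deriv ε r hε).deriv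
  have h2 : Continuous (deriv (bub ε)) := by
    rw [h1]
    exact Continuous.div (by fun_prop) (by fun_prop) (fun r => by positivity)
  have h3 : Continuous (deriv ψ) := hψs.continuous_deriv (by simp)
  have h4 := hψs.continuous
  have h5 := bub_cont ε hε
  fun_prop

lemma A_bound (ρ : ℝ)
    (hρ : ρ ∈ Set.Ioc (0 : ℝ) 1)
    (ψ : ℝ → ℝ)
    (hψs : ContDiff ℝ (⊤ : ℕ∞) ψ)
    (hψ1 : ∀ r : ℝ, 0 ≤ r → r ≤ ρ → ψ r = 1)
    (hψ01 : ∀ r : ℝ, ρ ≤ r → r ≤ 2 * ρ → ψ r ∈ Set.Icc (0 : ℝ) 1) : ∃ a : ℝ, ∀ ε : ℝ, 0 < ε →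
    ∫ r in (0 : ℝ)..(2 * ρ), r ^ 3 * (deriv (fun r => ψ r * bub ε r) r) ^ 2
      ≤ 16 / 3 + a * ε ^ 2 := by
  obtain ⟨hρ0, hρ1⟩ := hρ
  have h3 : Continuous (deriv ψ) := hψs.continuous_deriv (by simp)
  obtain ⟨M, hM⟩ := (isCompact_Icc (a := ρ) (b := 2 * ρ)).exists_bound_of_continuousOn
    h3.continuousOn
  refine ⟨ρ * (8 * (16 * M ^ 2 / ρ ^ 4 + 64 / ρ ^ 6)), fun ε hε => ?_⟩
  have hc := dphi_cont ψ hψs ε hε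
  have hc1 : Continuous fun r : ℝ => r ^ 3 * (deriv (fun r => ψ r * bub ε r) r) ^ 2 := by fun_prop
  have hc2 : Continuous fun r : ℝ => r ^ 3 * (32 * ε ^ 2 * r ^ 2 / (ε ^ 2 + r ^ 2) ^ 4) :=
    Continuous.mul (by fun_prop)
      (Continuous.div (by fun_prop) (by fun_prop) (fun r => by positivity))
  rw [← intervalIntegral.integral_add_adjacent_intervals (hc1.intervalIntegrable 0 ρ)
    (hc1.intervalIntegrable ρ (2 * ρ))]
  apply add_le_add
  · calc _ ≤ ∫ r in (0 : ℝ)..ρ, r ^ 3 * (32 * ε ^ 2 * r ^ 2 / (ε ^ 2 + r ^ 2) ^ 4) := by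
          apply intervalIntegral.integral_mono_on_of_le_Ioo hρ0.le (hc1.intervalIntegrable 0 ρ)
            (hc2.intervalIntegrable 0 ρ)
          intro r hr
          have : (fun r => ψ r * bub ε r) =ᶠ[nhds r] bub ε := by
            filter_upwards [isOpen_Ioo.mem_nhds hr] with s hs
            simp [hψ1 s hs.1.le hs.2.le]
          rw [this.deriv_eq, bub_deriv_sq ε r hε]
      _ = 16 / 3 * (ρ ^ 2 / (ε ^ 2 + ρ ^ 2)) ^ 3 := by
          rw [intervalIntegral.integral_eq_sub_of_hasDerivAt
            (fun r _ => gradPrim ε r hε) (hc2.intervalIntegrable 0 ρ)]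
          simp
      _ ≤ 16 / 3 * 1 ^ 3 := by
          gcongr
          rw [div_le_one (by positivity)]
          nlinarith
      _ = 16 / 3 := by norm_num
  · calc _ ≤ ∫ r in ρ..(2 * ρ), 8 * (16 * M ^ 2 / ρ ^ 4 + 64 / ρ ^ 6) * ε ^ 2 := by
          apply intervalIntegral.integral_mono_on (by linarith) (hc1.intervalIntegrable _ _)
            (by simp)
          intro r hr
          have hr0 : 0 < r := hρ0.trans_le hr.1
          rw [(phi_hasDeriv ψ hψs ε hε r).deriv]
          have e1 : (deriv ψ r) ^ 2 ≤ M ^ 2 := by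
            rw [← sq_abs]
            exact pow_le_pow_left₀ (abs_nonneg _) (hM r hr) 2
          have e2 : (bub ε r) ^ 2 ≤ 8 * ε ^ 2 / ρ ^ 4 := (bub_sq_le ε r hε hr0).trans (by
            have := hr.1
            gcongr)
          have e3 : (deriv (bub ε) r) ^ 2 ≤ 32 * ε ^ 2 / ρ ^ 6 :=
            (bub_deriv_sq_le ε r hε hr0).trans (by
            have := hr.1
            gcongr)
          have e4 : (ψ r) ^ 2 ≤ 1 := by
            have := hψ01 r hr.1 hr.2
            nlinarith [this.1, this.2]
          have e5 : (deriv ψ r * bub ε r + ψ r * deriv (bub ε) r) ^ 2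
              ≤ 2 * (M ^ 2 * (8 * ε ^ 2 / ρ ^ 4)) + 2 * (1 * (32 * ε ^ 2 / ρ ^ 6)) := by
            have f1 := mul_le_mul e1 e2 (sq_nonneg _) (sq_nonneg _)
            have f2 := mul_le_mul e4 e3 (sq_nonneg _) zero_le_one
            nlinarith [sq_nonneg (deriv ψ r * bub ε r - ψ r * deriv (bub ε) r)]
          have e6 : r ^ 3 ≤ 8 := by
            calc r ^ 3 ≤ 2 ^ 3 := by
                  have := hr.2
                  gcongr; linarith
              _ = 8 := by norm_num
          calc _ ≤ 8 * (2 * (M ^ 2 * (8 * ε ^ 2 / ρ ^ 4)) + 2 * (1 * (32 * ε ^ 2 / ρ ^ 6))) :=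
                mul_le_mul e6 e5 (sq_nonneg _) (by norm_num)
            _ = _ := by ring
      _ = _ := by
          rw [intervalIntegral.integral_const, smul_eq_mul]; ring

lemma B_bound (ρ : ℝ)
    (hρ : ρ ∈ Set.Ioc (0 : ℝ) 1)
    (ψ : ℝ → ℝ)
    (hψs : ContDiff ℝ (⊤ : ℕ∞) ψ)
    (hψ1 : ∀ r : ℝ, 0 ≤ r → r ≤ ρ → ψ r = 1) (ε : ℝ) (hε : 0 < ε) (hερ : ε ≤ ρ) :
    16 / 3 - 16 / ρ ^ 2 * ε ^ 2 ≤ ∫ r in (0 : ℝ)..(2 * ρ), r ^ 3 * (ψ r * bub ε r) ^ 4 := by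
  obtain ⟨hρ0, hρ1⟩ := hρ
  have h4 := hψs.continuous
  have h5 := bub_cont ε hε
  have hc1 : Continuous fun r : ℝ => r ^ 3 * (ψ r * bub ε r) ^ 4 := by fun_prop
  have hc2 : Continuous fun r : ℝ => r ^ 3 * (64 * ε ^ 4 / (ε ^ 2 + r ^ 2) ^ 4) :=
    Continuous.mul (by fun_prop)
      (Continuous.div (by fun_prop) (by fun_prop) (fun r => by positivity))
  rw [← intervalIntegral.integral_add_adjacent_intervals (hc1.intervalIntegrable 0 ρ)
    (hc1.intervalIntegrable ρ (2 * ρ))]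
  have p2 : 0 ≤ ∫ r in ρ..(2 * ρ), r ^ 3 * (ψ r * bub ε r) ^ 4 := by
    apply intervalIntegral.integral_nonneg (by linarith)
    intro r hr
    have hr0 : 0 < r := hρ0.trans_le hr.1
    have : 0 ≤ (ψ r * bub ε r) ^ 4 := by positivity
    positivity
  have p1 : ∫ r in (0 : ℝ)..ρ, r ^ 3 * (ψ r * bub ε r) ^ 4
      = 16 * (ρ ^ 2 / (ε ^ 2 + ρ ^ 2)) ^ 2 - 32 / 3 * (ρ ^ 2 / (ε ^ 2 + ρ ^ 2)) ^ 3 := by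
    have : ∫ r in (0 : ℝ)..ρ, r ^ 3 * (ψ r * bub ε r) ^ 4
        = ∫ r in (0 : ℝ)..ρ, r ^ 3 * (64 * ε ^ 4 / (ε ^ 2 + r ^ 2) ^ 4) := by
      apply intervalIntegral.integral_congr
      intro r hr
      rw [Set.uIcc_of_le hρ0.le] at hr
      have e : (bub ε r) ^ 4 = ((bub ε r) ^ 2) ^ 2 := by ring
      simp only [hψ1 r hr.1 hr.2, one_mul, e, bub_sq]
      field_simp
      norm_num
    rw [this, intervalIntegral.integral_eq_sub_of_hasDerivAt
            (fun r _ => fourPrim ε r hε) (hc2.intervalIntegrable 0 ρ)]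
    simp
  rw [p1]
  have hd : ρ ^ 2 / (ε ^ 2 + ρ ^ 2) = 1 - ε ^ 2 / (ε ^ 2 + ρ ^ 2) := by
    field_simp; ring
  set δ := ε ^ 2 / (ε ^ 2 + ρ ^ 2) with hδ
  have d0 : 0 ≤ δ := by positivity
  have d1 : δ ≤ 1 := by
    rw [hδ, div_le_one (by positivity)]; nlinarith
  have d2 : δ ≤ ε ^ 2 / ρ ^ 2 := by
    rw [hδ]; gcongr; nlinarith
  rw [hd]
  have : 16 / ρ ^ 2 * ε ^ 2 = 16 * (ε ^ 2 / ρ ^ 2) := by ring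
  rw [this]
  nlinarith [mul_nonneg d0 (sub_nonneg.2 d1), pow_nonneg d0 3]

lemma C_bound (ρ : ℝ)
    (hρ : ρ ∈ Set.Ioc (0 : ℝ) 1)
    (ψ : ℝ → ℝ)
    (hψs : ContDiff ℝ (⊤ : ℕ∞) ψ)
    (hψ1 : ∀ r : ℝ, 0 ≤ r → r ≤ ρ → ψ r = 1)
    (hψ01 : ∀ r : ℝ, ρ ≤ r → r ≤ 2 * ρ → ψ r ∈ Set.Icc (0 : ℝ) 1) (ε : ℝ) (hε : 0 < ε) (hερ : ε ≤ ρ) (hL : 1 ≤ - Real.log ε) :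
    0 ≤ (∫ r in (0 : ℝ)..(2 * ρ), r ^ 3 * (ψ r * bub ε r) ^ 2) ∧
    (∫ r in (0 : ℝ)..(2 * ρ), r ^ 3 * (ψ r * bub ε r) ^ 2) ≤ 16 * (ε ^ 2 * (- Real.log ε)) := by
  obtain ⟨hρ0, hρ1⟩ := hρ
  have h4 := hψs.continuous
  have h5 := bub_cont ε hε
  have hc1 : Continuous fun r : ℝ => r ^ 3 * (ψ r * bub ε r) ^ 2 := by fun_prop
  have hc2 : Continuous fun r : ℝ => r ^ 3 * (8 * ε ^ 2 / (ε ^ 2 + r ^ 2) ^ 2) :=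
    Continuous.mul (by fun_prop)
      (Continuous.div (by fun_prop) (by fun_prop) (fun r => by positivity))
  constructor
  · apply intervalIntegral.integral_nonneg (by linarith)
    intro r hr
    have hr0 : 0 ≤ r := hr.1
    positivity
  · calc _ ≤ ∫ r in (0 : ℝ)..(2 * ρ), r ^ 3 * (8 * ε ^ 2 / (ε ^ 2 + r ^ 2) ^ 2) := by
          apply intervalIntegral.integral_mono_on (by linarith) (hc1.intervalIntegrable _ _)
            (hc2.intervalIntegrable _ _)
          intro r hr
          have hr0 : 0 ≤ r := hr.1
          have e4 : (ψ r) ^ 2 ≤ 1 := by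
            rcases le_total r ρ with h | h
            · rw [hψ1 r hr0 h]; norm_num
            · have := hψ01 r h hr.2
              nlinarith [this.1, this.2]
          rw [mul_pow, ← bub_sq]
          have := mul_le_mul_of_nonneg_right e4 (sq_nonneg (bub ε r))
          gcongr
          linarith
      _ = 4 * ε ^ 2 * (Real.log (ε ^ 2 + (2 * ρ) ^ 2) + ε ^ 2 / (ε ^ 2 + (2 * ρ) ^ 2))
          - 4 * ε ^ 2 * (2 * Real.log ε + 1) := by
          rw [intervalIntegral.integral_eq_sub_of_hasDerivAt
            (fun r _ => c_prim ε r hε) (hc2.intervalIntegrable _ _)]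
          have : ε ^ 2 / ε ^ 2 = 1 := div_self (by positivity)
          simp [this]
      _ ≤ 4 * ε ^ 2 * (2 + 1) - 4 * ε ^ 2 * (2 * Real.log ε + 1) := by
          gcongr
          · rw [Real.log_le_iff_le_exp (by positivity)]
            have h1 := Real.exp_one_gt_d9
            have : Real.exp 2 = Real.exp 1 ^ 2 := by rw [← Real.exp_nat_mul]; norm_num
            rw [this]
            nlinarith
          · rw [div_le_one (by positivity)]; nlinarith
      _ ≤ _ := by nlinarith [mul_nonneg (sq_nonneg ε) (sub_nonneg.2 hL)]

lemma log_bub_sq (ε r : ℝ) (hε : 0 < ε) :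
    Real.log ((bub ε r) ^ 2) = Real.log 8 + 2 * Real.log ε - 2 * Real.log (ε ^ 2 + r ^ 2) := by
  rw [bub_sq, Real.log_div (by positivity) (by positivity),
    Real.log_mul (by norm_num) (by positivity), Real.log_pow, Real.log_pow]
  norm_num

lemma annulus_pt (F μ p b2 L c : ℝ) (hμ : 0 < μ) (hp0 : 0 ≤ p) (hp1 : p ≤ 1) (hb : 0 < b2)
    (hL : 0 ≤ L) (hc : 0 ≤ c) (hlog : -2 * L - c ≤ Real.log b2) :
    -(b2 * (2 * μ * L + (|F| + μ + μ * c)))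
      ≤ (p ^ 2 * b2) * (F - μ + μ * Real.log (p ^ 2 * b2) + μ) := by
  rcases hp0.eq_or_lt with h | h
  · rw [← h]
    have : 0 ≤ b2 * (2 * μ * L + (|F| + μ + μ * c)) := by positivity
    simp
    linarith
  · rw [Real.log_mul (by positivity) hb.ne']
    have e1 : -1 ≤ p ^ 2 * Real.log (p ^ 2) := by
      have := Real.one_sub_inv_le_log_of_pos (x := p ^ 2) (by positivity)
      have h2 := mul_le_mul_of_nonneg_left this (sq_nonneg p)
      have h3 : p ^ 2 * (1 - (p ^ 2)⁻¹) = p ^ 2 - 1 := by field_simp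
      nlinarith [sq_nonneg p]
    have hp2 : p ^ 2 ≤ 1 := by nlinarith
    have e2 : -2 * L - c ≤ p ^ 2 * Real.log b2 := by
      nlinarith [mul_le_mul_of_nonneg_left hlog (sq_nonneg p),
        mul_nonneg (sub_nonneg.2 hp2) hL, mul_nonneg (sub_nonneg.2 hp2) hc]
    have e3 : -|F| ≤ p ^ 2 * F := by
      nlinarith [mul_le_mul_of_nonneg_left (neg_abs_le F) (sq_nonneg p),
        mul_nonneg (sub_nonneg.2 hp2) (abs_nonneg F)]
    have : -(2 * μ * L + (|F| + μ + μ * c))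
        ≤ p ^ 2 * F + μ * (p ^ 2 * Real.log (p ^ 2)) + μ * (p ^ 2 * Real.log b2) := by
      nlinarith [mul_le_mul_of_nonneg_left e1 hμ.le, mul_le_mul_of_nonneg_left e2 hμ.le]
    have := mul_le_mul_of_nonneg_left this hb.le
    nlinarith

lemma inner_alg (lam μ E0 L ell δ lr Lam η : ℝ) (hμ : 0 < μ)
    (hE : E0 = lam - μ + μ * Real.log 8) (hL : 0 ≤ L)
    (hH : 3 * μ ≤ lam - 2 * μ + μ * Real.log 8 - 2 * μ * lr)
    (h1 : |ell| ≤ Lam) (h2 : ell ≤ 2 * lr + η) (hη : η ≤ 1 / 4) (hd0 : 0 ≤ δ) (hd : δ ≤ η) :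
    5 * μ * L - (|E0| * (Lam + 2) + μ * Lam ^ 2 + 2 * μ * (Lam + 1)) ≤
    ((E0 - 2 * μ * L) * (ell + δ) - μ * ell ^ 2 - 2 * μ * (δ * (ell + 1)))
     - ((E0 - 2 * μ * L) * (-2 * L + 1) - μ * (-2 * L) ^ 2 - 2 * μ * (-2 * L + 1)) := by
  have a1 : -(|E0| * (Lam + 2)) ≤ E0 * (ell + δ - 1) := by
    have : |E0 * (ell + δ - 1)| ≤ |E0| * (Lam + 2) := by
      rw [abs_mul]
      gcongr
      rw [abs_le] at *
      constructor <;> linarith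
    exact (abs_le.1 this).1
  have a2 : ell ^ 2 ≤ Lam ^ 2 := by
    rw [← sq_abs]; gcongr
  have a3 : δ * (ell + 1) ≤ Lam + 1 := by
    have : 0 ≤ Lam := (abs_nonneg _).trans h1
    have : ell ≤ Lam := (abs_le.1 h1).2
    nlinarith
  have a4 : 5 * μ * L ≤ L * (2 * E0 - 2 * μ * ell - 2 * μ - 2 * μ * δ) := by
    rw [mul_comm]
    apply mul_le_mul_of_nonneg_left _ hL
    have : μ * (ell + δ) ≤ μ * (2 * lr + 1 / 2) :=
      mul_le_mul_of_nonneg_left (by linarith) hμ.le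
    linarith
  nlinarith [mul_le_mul_of_nonneg_left a2 hμ.le, mul_le_mul_of_nonneg_left a3 hμ.le]

lemma mullog_cont (f : ℝ → ℝ) (hf : Continuous f) :
    Continuous (fun r => (f r) ^ 2 * Real.log ((f r) ^ 2)) :=
  Real.continuous_mul_log.comp (hf.pow 2)

lemma G_bound (ρ : ℝ)
    (hρ : ρ ∈ Set.Ioc (0 : ℝ) 1)
    (ψ : ℝ → ℝ)
    (hψs : ContDiff ℝ (⊤ : ℕ∞) ψ)
    (hψ1 : ∀ r : ℝ, 0 ≤ r → r ≤ ρ → ψ r = 1)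
    (hψ01 : ∀ r : ℝ, ρ ≤ r → r ≤ 2 * ρ → ψ r ∈ Set.Icc (0 : ℝ) 1) (lam μ : ℝ) (hμ : 0 < μ)
    (hH : 3 * μ ≤ lam - 2 * μ + μ * Real.log 8 - 2 * μ * Real.log ρ) :
    ∃ c : ℝ, ∀ ε : ℝ, 0 < ε → ε ≤ ρ / 2 → 1 ≤ - Real.log ε →
    4 * μ * (ε ^ 2 * (-Real.log ε)) - c * ε ^ 2 ≤
      ∫ r in (0 : ℝ)..(2 * ρ), r ^ 3 * ((ψ r * bub ε r) ^ 2 *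
        (lam - μ + μ * Real.log ((ψ r * bub ε r) ^ 2))) := by
  obtain ⟨hρ0, hρ1⟩ := hρ
  set E0 := lam - μ + μ * Real.log 8 with hE0
  set Lam := 2 * |Real.log ρ| + 1 with hLam
  refine ⟨4 * (|E0| * (Lam + 2) + μ * Lam ^ 2 + 2 * μ * (Lam + 1))
    + 8 * (|lam - μ| + μ + μ * 4), fun ε hε hερ hL => ?_⟩
  have h4 := hψs.continuous
  have h5 := bub_cont ε hε
  have hc1 : Continuous fun r : ℝ => r ^ 3 * ((ψ r * bub ε r) ^ 2 *
        (lam - μ + μ * Real.log ((ψ r * bub ε r) ^ 2))) := by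
    have h6 := mullog_cont (fun r => ψ r * bub ε r) (by fun_prop)
    have h7 : Continuous fun r : ℝ => r ^ 3 * ((lam - μ) * (ψ r * bub ε r) ^ 2 +
        μ * ((ψ r * bub ε r) ^ 2 * Real.log ((ψ r * bub ε r) ^ 2))) := by
      fun_prop
    convert h7 using 2
    ring
  have hw : ∀ r : ℝ, ε ^ 2 + r ^ 2 ≠ 0 := fun r => by positivity
  have hc2 : Continuous fun r : ℝ => r ^ 3 * (8 * ε ^ 2 / (ε ^ 2 + r ^ 2) ^ 2 *
      ((E0 + 2 * μ * Real.log ε) - 2 * μ * Real.log (ε ^ 2 + r ^ 2))) := by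
    have : Continuous fun r : ℝ => Real.log (ε ^ 2 + r ^ 2) :=
      Continuous.log (by fun_prop) hw
    have h2 : Continuous fun r : ℝ => 8 * ε ^ 2 / (ε ^ 2 + r ^ 2) ^ 2 :=
      Continuous.div (by fun_prop) (by fun_prop) (fun r => by positivity)
    fun_prop
  rw [← intervalIntegral.integral_add_adjacent_intervals (hc1.intervalIntegrable 0 ρ)
    (hc1.intervalIntegrable ρ (2 * ρ))]
  have p1 : 4 * ε ^ 2 * (5 * μ * (-Real.log ε)
        - (|E0| * (Lam + 2) + μ * Lam ^ 2 + 2 * μ * (Lam + 1))) ≤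
      ∫ r in (0 : ℝ)..ρ, r ^ 3 * ((ψ r * bub ε r) ^ 2 *
        (lam - μ + μ * Real.log ((ψ r * bub ε r) ^ 2))) := by
    have : ∫ r in (0 : ℝ)..ρ, r ^ 3 * ((ψ r * bub ε r) ^ 2 *
        (lam - μ + μ * Real.log ((ψ r * bub ε r) ^ 2)))
        = ∫ r in (0 : ℝ)..ρ, r ^ 3 * (8 * ε ^ 2 / (ε ^ 2 + r ^ 2) ^ 2 *
      ((E0 + 2 * μ * Real.log ε) - 2 * μ * Real.log (ε ^ 2 + r ^ 2))) := by
      apply intervalIntegral.integral_congr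
      intro r hr
      rw [Set.uIcc_of_le hρ0.le] at hr
      simp only [hψ1 r hr.1 hr.2, one_mul]
      rw [log_bub_sq ε r hε, bub_sq, hE0]
      ring
    rw [this, intervalIntegral.integral_eq_sub_of_hasDerivAt
      (fun r _ => g_prim ε r _ μ hε) (hc2.intervalIntegrable 0 ρ)]
    set δ := ε ^ 2 / (ε ^ 2 + ρ ^ 2) with hδ
    have d0 : 0 ≤ δ := by positivity
    have d2 : δ ≤ ε ^ 2 / ρ ^ 2 := by
      rw [hδ]; gcongr; nlinarith
    have hη : ε ^ 2 / ρ ^ 2 ≤ 1 / 4 := by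
      rw [div_le_iff₀ (by positivity)]; nlinarith
    have hl1 : 2 * Real.log ρ ≤ Real.log (ε ^ 2 + ρ ^ 2) := by
      have : 2 * Real.log ρ = Real.log (ρ ^ 2) := by rw [Real.log_pow]; norm_num
      rw [this]
      apply Real.log_le_log (by positivity); nlinarith
    have hl2 : Real.log (ε ^ 2 + ρ ^ 2) ≤ 2 * Real.log ρ + ε ^ 2 / ρ ^ 2 := by
      have e : ε ^ 2 + ρ ^ 2 = ρ ^ 2 * (ε ^ 2 / ρ ^ 2 + 1) := by field_simp
      rw [e, Real.log_mul (by positivity) (by positivity), Real.log_pow]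
      have := Real.log_le_sub_one_of_pos (x := ε ^ 2 / ρ ^ 2 + 1) (by positivity)
      push_cast
      linarith
    have hl3 : |Real.log (ε ^ 2 + ρ ^ 2)| ≤ Lam := by
      rw [abs_le]
      have := neg_abs_le (Real.log ρ)
      have := le_abs_self (Real.log ρ)
      constructor <;> linarith
    have key := inner_alg lam μ E0 (-Real.log ε) (Real.log (ε ^ 2 + ρ ^ 2)) δ (Real.log ρ) Lam
      (ε ^ 2 / ρ ^ 2) hμ hE0 (by linarith) hH hl3 hl2 hη d0 d2
    have key2 := mul_le_mul_of_nonneg_left key (show 0 ≤ 4 * ε ^ 2 by positivity)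
    refine key2.trans (le_of_eq ?_)
    have e1 : ε ^ 2 / (ε ^ 2 + 0 ^ 2) = 1 := by simp [hε.ne']
    have e2 : Real.log (ε ^ 2 + 0 ^ 2) = 2 * Real.log ε := by simp
    have e3 : ∀ x y : ℝ, ε ^ 2 * x / y = ε ^ 2 / y * x := fun x y => by ring
    simp only [e3, e1, e2]
    rw [← hδ]
    ring
  have p2 : -(8 * ε ^ 2 * (2 * μ * (-Real.log ε) + (|lam - μ| + μ + μ * 4))) ≤
      ∫ r in ρ..(2 * ρ), r ^ 3 * ((ψ r * bub ε r) ^ 2 *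
        (lam - μ + μ * Real.log ((ψ r * bub ε r) ^ 2))) := by
    set T := 2 * μ * (-Real.log ε) + (|lam - μ| + μ + μ * 4) with hT
    have hL0 : 0 ≤ - Real.log ε := by linarith
    have hT0 : 0 ≤ T := by positivity
    calc -(8 * ε ^ 2 * T) = ∫ r in ρ..(2 * ρ), -(8 * ε ^ 2 / ρ * T) := by
          rw [intervalIntegral.integral_const, smul_eq_mul]
          field_simp
          ring
      _ ≤ _ := by
          apply intervalIntegral.integral_mono_on (by linarith) (by simp)
            (hc1.intervalIntegrable _ _)
          intro r hr
          have hr0 : 0 < r := hρ0.trans_le hr.1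
          have hb : 0 < (bub ε r) ^ 2 := by rw [bub_sq]; positivity
          have hlog : -2 * (-Real.log ε) - 4 ≤ Real.log ((bub ε r) ^ 2) := by
            rw [log_bub_sq ε r hε]
            have l8 : 0 ≤ Real.log 8 := Real.log_nonneg (by norm_num)
            have lw : Real.log (ε ^ 2 + r ^ 2) ≤ 2 := by
              rw [Real.log_le_iff_le_exp (by positivity)]
              have h1 := Real.exp_one_gt_d9
              have : Real.exp 2 = Real.exp 1 ^ 2 := by rw [← Real.exp_nat_mul]; norm_num
              rw [this]
              have : r ^ 2 ≤ 2 ^ 2 := by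
                have := hr.2
                gcongr; linarith
              nlinarith
            linarith
          have hp := hψ01 r hr.1 hr.2
          have key := annulus_pt (lam - μ) μ (ψ r) ((bub ε r) ^ 2) (-Real.log ε) 4 hμ hp.1 hp.2
            hb hL0 (by norm_num) hlog
          rw [← hT] at key
          have e : lam - μ - μ + μ * Real.log (ψ r ^ 2 * bub ε r ^ 2) + μ
            = lam - μ + μ * Real.log (ψ r ^ 2 * bub ε r ^ 2) := by ring
          rw [e] at key
          rw [mul_pow]
          have k2 := mul_le_mul_of_nonneg_left key (show 0 ≤ r ^ 3 by positivity)
          refine le_trans ?_ k2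
          have : r ^ 3 * (bub ε r) ^ 2 ≤ 8 * ε ^ 2 / ρ := by
            calc r ^ 3 * (bub ε r) ^ 2 ≤ r ^ 3 * (8 * ε ^ 2 / r ^ 4) := by
                  gcongr; exact bub_sq_le ε r hε hr0
              _ = 8 * ε ^ 2 / r := by field_simp
              _ ≤ 8 * ε ^ 2 / ρ := by
                  have := hr.1
                  gcongr
          nlinarith [mul_le_mul_of_nonneg_right this hT0]
  nlinarith


lemma ev_small (M c : ℝ) (hc : 0 < c) (d : ℝ) (hd : 0 < d) :
    ∃ ε₀ : ℝ, 0 < ε₀ ∧ ∀ ε ∈ Set.Ioo (0 : ℝ) ε₀,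
      M ≤ -Real.log ε ∧ ε ^ 2 * (-Real.log ε) < c ∧ ε ≤ d := by
  have h1 : ∀ᶠ ε : ℝ in nhdsWithin 0 (Set.Ioi 0), M ≤ -Real.log ε :=
    (Filter.tendsto_neg_atBot_atTop.comp Real.tendsto_log_nhdsGT_zero).eventually_ge_atTop M
  have h2 : ∀ᶠ ε : ℝ in nhdsWithin 0 (Set.Ioi 0), ε ^ 2 * (-Real.log ε) < c := by
    have := (tendsto_log_mul_rpow_nhdsGT_zero (r := 2) (by norm_num)).neg
    rw [neg_zero] at this
    filter_upwards [this.eventually_lt_const hc] with ε h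
    rw [Real.rpow_ofNat] at h
    linarith
  have h3 : ∀ᶠ ε : ℝ in nhdsWithin 0 (Set.Ioi 0), ε ≤ d :=
    nhdsWithin_le_nhds (Iic_mem_nhds hd)
  obtain ⟨e, he, hs⟩ := mem_nhdsGT_iff_exists_Ioo_subset.1 (h1.and (h2.and h3))
  exact ⟨e, he, fun ε hε => hs hε⟩


lemma log_split (t p : ℝ) : (t * p) ^ 2 * (Real.log ((t * p) ^ 2) - 1)
    = t ^ 2 * (p ^ 2 * Real.log (p ^ 2)) + (t ^ 2 * Real.log (t ^ 2) - t ^ 2) * p ^ 2 := by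
  rcases eq_or_ne t 0 with h | h
  · simp [h]
  rcases eq_or_ne p 0 with h' | h'
  · simp [h']
  rw [mul_pow, Real.log_mul (by positivity) (by positivity)]
  ring

lemma sub_one_le_mul_log (s : ℝ) (hs : 0 ≤ s) : s - 1 ≤ s * Real.log s := by
  rcases hs.eq_or_lt with h | h
  · simp [← h]
  · have := mul_le_mul_of_nonneg_left (Real.one_sub_inv_le_log_of_pos h) hs
    have h3 : s * (1 - s⁻¹) = s - 1 := by field_simp
    linarith

/-- Lemma 3.5, case `μ > 0`, `N = 4`: for every `ρ ∈ (0,1]` with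
`8^μ > 25^μ e^{2μ-λ} ρ^{2μ}` and `B_{2ρ}(0) ⊆ Ω`, and `U_ε(x) = ψ(|x|) u_ε(x)`,
there is `ε₀ > 0` with `I(t U_ε) < K₄/4 = (1/4) S²` for all `ε ∈ (0, ε₀)`, `t ≥ 0`
(here `2* = 4`). -/
theorem stmt_18 (lam μ : ℝ) (hμ : 0 < μ)
    (Ω : Set (EuclideanSpace ℝ (Fin 4))) (hΩo : IsOpen Ω)
    (hΩb : Bornology.IsBounded Ω) (h0Ω : (0 : EuclideanSpace ℝ (Fin 4)) ∈ Ω)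
    (u : ℝ → EuclideanSpace ℝ (Fin 4) → ℝ)
    (hu : ∀ ε : ℝ, 0 < ε → ∀ x : EuclideanSpace ℝ (Fin 4),
      u ε x = Real.sqrt 8 * ε / (ε ^ 2 + ‖x‖ ^ 2))
    (ρ : ℝ) (hρ : ρ ∈ Set.Ioc (0 : ℝ) 1)
    (hρμ : (8 : ℝ) ^ μ > (25 : ℝ) ^ μ * Real.exp (2 * μ - lam) * ρ ^ (2 * μ))
    (hball : Metric.closedBall (0 : EuclideanSpace ℝ (Fin 4)) (2 * ρ) ⊆ Ω)
    (ψ : ℝ → ℝ) (hψs : ContDiff ℝ (⊤ : ℕ∞) ψ)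
    (hψ1 : ∀ r : ℝ, 0 ≤ r → r ≤ ρ → ψ r = 1)
    (hψ01 : ∀ r : ℝ, ρ ≤ r → r ≤ 2 * ρ → ψ r ∈ Set.Icc (0 : ℝ) 1)
    (hψ0 : ∀ r : ℝ, 2 * ρ ≤ r → ψ r = 0)
    (I : (EuclideanSpace ℝ (Fin 4) → ℝ) → ℝ)
    (hI : ∀ v : EuclideanSpace ℝ (Fin 4) → ℝ,
      I v = (1 / 2) * (∫ x in Ω, ‖fderiv ℝ v x‖ ^ 2) -
        (1 / 4) * (∫ x in Ω, (max (v x) 0) ^ 4) -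
        (lam / 2) * (∫ x in Ω, (max (v x) 0) ^ 2) -
        (μ / 2) * (∫ x in Ω, (max (v x) 0) ^ 2 * (Real.log ((max (v x) 0) ^ 2) - 1))) :
    ∃ ε₀ : ℝ, 0 < ε₀ ∧ ∀ ε ∈ Set.Ioo (0 : ℝ) ε₀, ∀ t : ℝ, 0 ≤ t →
      I (fun x => t * (ψ ‖x‖ * u ε x)) <
        (∫ x : EuclideanSpace ℝ (Fin 4), ‖fderiv ℝ (u 1) x‖ ^ 2) / 4 := by
  obtain ⟨hρ0, hρ1⟩ := id hρ
  have hH := hyp_log lam μ ρ hμ hρ0 hρμ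
  obtain ⟨a, ha⟩ := A_bound ρ hρ ψ hψs hψ1 hψ01
  obtain ⟨c, hc⟩ := G_bound ρ hρ ψ hψs hψ1 hψ01 lam μ hμ hH
  obtain ⟨ε₀, hε₀, hsm⟩ := ev_small (max 1 (max ((a + c) / (2 * μ)) (16 / ρ ^ 2 / μ)))
    (16 / 324 / μ) (by positivity) (ρ / 2) (by positivity)
  refine ⟨ε₀, hε₀, fun ε hεI t ht => ?_⟩
  have hε : 0 < ε := hεI.1
  obtain ⟨hM, hh, hερ⟩ := hsm ε hεI
  have hL1 : 1 ≤ -Real.log ε := (le_max_left _ _).trans hM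
  have hL2 : (a + c) / (2 * μ) ≤ -Real.log ε :=
    ((le_max_left _ _).trans (le_max_right _ _)).trans hM
  have hL3 : 16 / ρ ^ 2 / μ ≤ -Real.log ε :=
    ((le_max_right _ _).trans (le_max_right _ _)).trans hM
  have hA := ha ε hε
  have hB := B_bound ρ hρ ψ hψs hψ1 ε hε (by linarith)
  obtain ⟨hC0, hC1⟩ := C_bound ρ hρ ψ hψs hψ1 hψ01 ε hε (by linarith) hL1
  have hG := hc ε hε hερ hL1
  -- the right-hand side
  have hu1 : u 1 = fun y => bub 1 ‖y‖ := by
    funext x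
    rw [hu 1 one_pos, bub]
  rw [hu1, K_eq]
  -- the left-hand side
  have hv : (fun x => t * (ψ ‖x‖ * u ε x)) = fun x => t * (ψ ‖x‖ * bub ε ‖x‖) := by
    funext x
    rw [hu ε hε, bub]
  rw [hv, hI]
  have hbub : ∀ r, 0 ≤ bub ε r := fun r => by unfold bub; positivity
  have hψn : ∀ r, 0 ≤ r → 0 ≤ ψ r := by
    intro r hr
    rcases le_total r ρ with h | h
    · rw [hψ1 r hr h]; norm_num
    · rcases le_total r (2 * ρ) with h' | h'
      · exact (hψ01 r h h').1
      · rw [hψ0 r h']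
  have hmax : ∀ x : EuclideanSpace ℝ (Fin 4), max (t * (ψ ‖x‖ * bub ε ‖x‖)) 0
      = t * (ψ ‖x‖ * bub ε ‖x‖) := fun x =>
    max_eq_left (mul_nonneg ht (mul_nonneg (hψn _ (norm_nonneg _)) (hbub _)))
  simp only [hmax]
  have hR : (0 : ℝ) ≤ 2 * ρ := by linarith
  have h4 := hψs.continuous
  have h5 := bub_cont ε hε
  have h6 := mullog_cont (fun r => ψ r * bub ε r) (by fun_prop)
  have iA : ∫ x in Ω, ‖fderiv ℝ (fun x : EuclideanSpace ℝ (Fin 4) =>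
      t * (ψ ‖x‖ * bub ε ‖x‖)) x‖ ^ 2
      = t ^ 2 * (kap * ∫ r in (0 : ℝ)..(2 * ρ),
          r ^ 3 * (deriv (fun r => ψ r * bub ε r) r) ^ 2) := by
    have hd : Differentiable ℝ (fun r => ψ r * bub ε r) :=
      fun r => (phi_hasDeriv ψ hψs ε hε r).differentiableAt
    have e1 : ∫ x in Ω, ‖fderiv ℝ (fun x : EuclideanSpace ℝ (Fin 4) =>
      t * (ψ ‖x‖ * bub ε ‖x‖)) x‖ ^ 2
        = ∫ x in Ω, t ^ 2 * (deriv (fun r => ψ r * bub ε r) ‖x‖) ^ 2 := by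
      apply integral_congr_ae
      filter_upwards [ae_restrict_of_ae ae_ne] with x hx
      rw [fderiv_radial (fun r => t * (ψ r * bub ε r)) (hd.const_mul t) x hx,
        deriv_const_mul _ (hd _), mul_pow]
    rw [e1, integral_const_mul,
      radial_set (fun r => (deriv (fun r => ψ r * bub ε r) r) ^ 2) (2 * ρ) hR ?_ Ω hball]
    intro r hr
    have : (fun r => ψ r * bub ε r) =ᶠ[nhds r] fun _ => 0 := by
      filter_upwards [isOpen_Ioi.mem_nhds hr] with s hs
      rw [hψ0 s (le_of_lt hs), zero_mul]
    rw [this.deriv_eq]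
    simp
  have iB : ∫ x in Ω, (t * (ψ ‖x‖ * bub ε ‖x‖)) ^ 4
      = t ^ 4 * (kap * ∫ r in (0 : ℝ)..(2 * ρ), r ^ 3 * (ψ r * bub ε r) ^ 4) := by
    rw [← radial_set (fun r => (ψ r * bub ε r) ^ 4) (2 * ρ) hR
      (fun r hr => by simp [hψ0 r hr.le]) Ω hball, ← integral_const_mul]
    simp only [mul_pow]
  have iC : ∫ x in Ω, (t * (ψ ‖x‖ * bub ε ‖x‖)) ^ 2
      = t ^ 2 * (kap * ∫ r in (0 : ℝ)..(2 * ρ), r ^ 3 * (ψ r * bub ε r) ^ 2) := by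
    rw [← radial_set (fun r => (ψ r * bub ε r) ^ 2) (2 * ρ) hR
      (fun r hr => by simp [hψ0 r hr.le]) Ω hball, ← integral_const_mul]
    simp only [mul_pow]
  have hcC : Continuous fun r : ℝ => r ^ 3 * (ψ r * bub ε r) ^ 2 := by fun_prop
  have hcD : Continuous fun r : ℝ =>
      r ^ 3 * ((ψ r * bub ε r) ^ 2 * Real.log ((ψ r * bub ε r) ^ 2)) := by fun_prop
  have iD : ∫ x in Ω, (t * (ψ ‖x‖ * bub ε ‖x‖)) ^ 2 *
        (Real.log ((t * (ψ ‖x‖ * bub ε ‖x‖)) ^ 2) - 1)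
      = kap * (t ^ 2 * (∫ r in (0 : ℝ)..(2 * ρ),
            r ^ 3 * ((ψ r * bub ε r) ^ 2 * Real.log ((ψ r * bub ε r) ^ 2)))
        + (t ^ 2 * Real.log (t ^ 2) - t ^ 2) *
          ∫ r in (0 : ℝ)..(2 * ρ), r ^ 3 * (ψ r * bub ε r) ^ 2) := by
    rw [radial_set (fun r => (t * (ψ r * bub ε r)) ^ 2 *
        (Real.log ((t * (ψ r * bub ε r)) ^ 2) - 1)) (2 * ρ) hR
      (fun r hr => by simp [hψ0 r hr.le]) Ω hball]
    congr 1
    rw [← intervalIntegral.integral_const_mul, ← intervalIntegral.integral_const_mul,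
      ← intervalIntegral.integral_add ((hcD.const_mul _).intervalIntegrable _ _)
        ((hcC.const_mul _).intervalIntegrable _ _)]
    apply intervalIntegral.integral_congr
    intro r _
    simp only [log_split]
    ring
  have iG : ∫ r in (0 : ℝ)..(2 * ρ), r ^ 3 * ((ψ r * bub ε r) ^ 2 *
        (lam - μ + μ * Real.log ((ψ r * bub ε r) ^ 2)))
      = (lam - μ) * (∫ r in (0 : ℝ)..(2 * ρ), r ^ 3 * (ψ r * bub ε r) ^ 2)
        + μ * (∫ r in (0 : ℝ)..(2 * ρ),
            r ^ 3 * ((ψ r * bub ε r) ^ 2 * Real.log ((ψ r * bub ε r) ^ 2))) := by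
    rw [← intervalIntegral.integral_const_mul, ← intervalIntegral.integral_const_mul,
      ← intervalIntegral.integral_add ((hcC.const_mul _).intervalIntegrable _ _)
        ((hcD.const_mul _).intervalIntegrable _ _)]
    apply intervalIntegral.integral_congr
    intro r _
    simp only
    ring
  rw [iA, iB, iC, iD]
  rw [iG] at hG
  generalize (∫ r in (0 : ℝ)..(2 * ρ), r ^ 3 * (deriv (fun r => ψ r * bub ε r) r) ^ 2) = A at *
  generalize (∫ r in (0 : ℝ)..(2 * ρ), r ^ 3 * (ψ r * bub ε r) ^ 4) = B at *
  generalize (∫ r in (0 : ℝ)..(2 * ρ), r ^ 3 * (ψ r * bub ε r) ^ 2) = C at *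
  generalize (∫ r in (0 : ℝ)..(2 * ρ),
            r ^ 3 * ((ψ r * bub ε r) ^ 2 * Real.log ((ψ r * bub ε r) ^ 2))) = D at *
  have hε2 : 0 < ε ^ 2 := by positivity
  generalize hhL : ε ^ 2 * (-Real.log ε) = h at *
  have hh0 : 0 < h := by
    rw [← hhL]; exact mul_pos hε2 (by linarith)
  have hx' : μ * h < 16 / 324 := by
    rw [lt_div_iff₀ hμ] at hh; linarith
  have hac : (a + c) * ε ^ 2 ≤ 2 * (μ * h) := by
    rw [div_le_iff₀ (by positivity)] at hL2
    have := mul_le_mul_of_nonneg_right hL2 hε2.le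
    rw [← hhL]; linarith
  have hb : 16 / ρ ^ 2 * ε ^ 2 ≤ μ * h := by
    rw [div_le_iff₀ hμ] at hL3
    have := mul_le_mul_of_nonneg_right hL3 hε2.le
    rw [← hhL]; linarith
  have key := final_alg (16 / 3) (μ * h) (μ * C) (A - ((lam - μ) * C + μ * D) - μ * C) B (t ^ 2)
    rfl (by positivity) hx' (by positivity)
    (by nlinarith [mul_le_mul_of_nonneg_left hC1 hμ.le])
    (by linarith) (by linarith) (sq_nonneg t)
  have hs := mul_le_mul_of_nonneg_left (sub_one_le_mul_log (t ^ 2) (sq_nonneg t))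
    (mul_nonneg hμ.le hC0)
  have hk := mul_lt_mul_of_pos_left key kap_pos
  have hs2 := mul_le_mul_of_nonneg_left hs kap_pos.le
  nlinarith
end

section
/- Let N = 3, μ < 0 and λ ∈ ℝ, and let Ω ⊂ ℝ³ be a bounded open set with 0 ∈ Ω such that K₃/3 + (μ/2)·e^{−λ/μ}·|Ω| > 0, where K₃ = ∫_{ℝ³} |∇u_1(x)|² dx and |Ω| is the Lebesgue measure of Ω. Then with ρ, ψ and U_ε as in the context (and with B_{2ρ}(0) ⊂ Ω), there exists ε₀ > 0 such that for every ε ∈ (0, ε₀) and every t ≥ 0, I(t·U_ε) < K₃ / 3. -/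
open MeasureTheory

abbrev E3 := EuclideanSpace ℝ (Fin 3)

noncomputable def uu (ε : ℝ) (x : E3) : ℝ :=
  (3 : ℝ) ^ ((1 : ℝ) / 4) * (ε / (ε ^ 2 + ‖x‖ ^ 2)) ^ ((1 : ℝ) / 2)

lemma q3_sq : ((3 : ℝ) ^ ((1 : ℝ) / 4)) ^ 2 = √3 := by
  rw [← Real.rpow_natCast, ← Real.rpow_mul (by norm_num), Real.sqrt_eq_rpow]
  norm_num

lemma den_pos {ε : ℝ} (hε : 0 < ε) (x : E3) : 0 < ε ^ 2 + ‖x‖ ^ 2 := by positivity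

lemma uu_pos {ε : ℝ} (hε : 0 < ε) (x : E3) : 0 < uu ε x := by
  unfold uu
  have := den_pos hε x
  positivity

lemma uu_sq {ε : ℝ} (hε : 0 < ε) (x : E3) : uu ε x ^ 2 = √3 * (ε / (ε ^ 2 + ‖x‖ ^ 2)) := by
  unfold uu
  have := den_pos hε x
  rw [mul_pow, q3_sq, ← Real.sqrt_eq_rpow, Real.sq_sqrt (by positivity)]

lemma uu_hasFDerivAt {ε : ℝ} (hε : 0 < ε) (x : E3) :
    HasFDerivAt (uu ε) ((- uu ε x / (ε ^ 2 + ‖x‖ ^ 2)) • innerSL ℝ x) x := by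
  have hd := den_pos hε x
  have h1 : HasFDerivAt (fun y : E3 => ‖y‖ ^ 2) (2 • innerSL ℝ x) x :=
    (hasStrictFDerivAt_norm_sq x).hasFDerivAt
  have hq : 0 < ε / (ε ^ 2 + ‖x‖ ^ 2) := by positivity
  have h2 : HasDerivAt (fun s : ℝ => (3 : ℝ) ^ ((1 : ℝ) / 4) * √(ε / (ε ^ 2 + s)))
      (- uu ε x / (ε ^ 2 + ‖x‖ ^ 2) / 2) (‖x‖ ^ 2) := by
    have h3 : HasDerivAt (fun s : ℝ => ε / (ε ^ 2 + s)) (-ε / (ε ^ 2 + ‖x‖ ^ 2) ^ 2) (‖x‖ ^ 2) := by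
      have := ((hasDerivAt_id (‖x‖ ^ 2)).const_add (ε ^ 2))
      have := (hasDerivAt_const (‖x‖ ^ 2) ε).div this hd.ne'
      exact this.congr_deriv (by simp)
    have h4 := (h3.sqrt hq.ne').const_mul ((3 : ℝ) ^ ((1 : ℝ) / 4))
    refine h4.congr_deriv ?_
    unfold uu
    rw [← Real.sqrt_eq_rpow]
    have hs : 0 < √(ε / (ε ^ 2 + ‖x‖ ^ 2)) := Real.sqrt_pos.mpr hq
    have hs2 : √(ε / (ε ^ 2 + ‖x‖ ^ 2)) ^ 2 = ε / (ε ^ 2 + ‖x‖ ^ 2) := Real.sq_sqrt hq.le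
    generalize √(ε / (ε ^ 2 + ‖x‖ ^ 2)) = s at *
    have : ε = s ^ 2 * (ε ^ 2 + ‖x‖ ^ 2) := by rw [hs2]; field_simp
    generalize ε ^ 2 + ‖x‖ ^ 2 = d at *
    subst this
    field_simp
  have h5 := h2.comp_hasFDerivAt x h1
  have h6 : (uu ε) = (fun s : ℝ => (3 : ℝ) ^ ((1 : ℝ) / 4) * √(ε / (ε ^ 2 + s))) ∘
      (fun y : E3 => ‖y‖ ^ 2) := by
    funext y
    simp [uu, Real.sqrt_eq_rpow]
  rw [← h6] at h5
  refine h5.congr_fderiv ?_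
  ext v
  simp
  ring

lemma uu_grad_norm {ε : ℝ} (hε : 0 < ε) (x : E3) :
    ‖fderiv ℝ (uu ε) x‖ = uu ε x / (ε ^ 2 + ‖x‖ ^ 2) * ‖x‖ := by
  rw [(uu_hasFDerivAt hε x).fderiv, norm_smul, innerSL_apply_norm, Real.norm_eq_abs, neg_div, abs_neg,
    abs_of_pos (div_pos (uu_pos hε x) (den_pos hε x))]

lemma uu_grad_sq {ε : ℝ} (hε : 0 < ε) (x : E3) :
    ‖fderiv ℝ (uu ε) x‖ ^ 2 = √3 * ε * ‖x‖ ^ 2 / (ε ^ 2 + ‖x‖ ^ 2) ^ 3 := by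
  rw [uu_grad_norm hε, mul_pow, div_pow, uu_sq hε]
  have := den_pos hε x
  field_simp

lemma uu_cont {ε : ℝ} (hε : 0 < ε) : Continuous (uu ε) :=
  continuous_iff_continuousAt.mpr fun x => (uu_hasFDerivAt hε x).continuousAt

/-- integrability of powers -/
lemma int_pow2 : Integrable (fun x : E3 => 1 / (1 + ‖x‖ ^ 2) ^ 2) := by
  have := integrable_rpow_neg_one_add_norm_sq (E := E3) (μ := volume) (r := 4) (by simp; norm_num)
  convert this using 2 with x
  have h : (0:ℝ) < 1 + ‖x‖ ^ 2 := by positivity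
  rw [show (-4 / 2 : ℝ) = -((2 : ℕ) : ℝ) by norm_num, Real.rpow_neg h.le, Real.rpow_natCast, one_div]

noncomputable def gg (ε : ℝ) (x : E3) : ℝ := √3 * ε * ‖x‖ ^ 2 / (ε ^ 2 + ‖x‖ ^ 2) ^ 3
noncomputable def hh (ε : ℝ) (x : E3) : ℝ := 3 * √3 * (ε / (ε ^ 2 + ‖x‖ ^ 2)) ^ 3

lemma gg_cont {ε : ℝ} (hε : 0 < ε) : Continuous (gg ε) := by
  unfold gg
  refine Continuous.div (by fun_prop) (by fun_prop) fun x => (pow_pos (den_pos hε x) 3).ne'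

lemma hh_cont {ε : ℝ} (hε : 0 < ε) : Continuous (hh ε) := by
  unfold hh
  refine continuous_const.mul (Continuous.pow (Continuous.div (by fun_prop) (by fun_prop)
    fun x => (den_pos hε x).ne') 3)

lemma gg_int1 : Integrable (gg 1) := by
  refine Integrable.mono' (int_pow2.const_mul √3) (gg_cont one_pos).aestronglyMeasurable
    (Filter.Eventually.of_forall fun x => ?_)
  have h : (0:ℝ) < 1 + ‖x‖ ^ 2 := by positivity
  have h3 : (0:ℝ) < √3 := by positivity
  unfold gg
  rw [one_pow, Real.norm_eq_abs, abs_of_nonneg (by positivity), mul_one, mul_one_div,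
    div_le_div_iff₀ (by positivity) (by positivity)]
  have : ‖x‖ ^ 2 ≤ 1 + ‖x‖ ^ 2 := by linarith
  calc _ = √3 * (1 + ‖x‖ ^ 2) ^ 2 * ‖x‖ ^ 2 := by ring
    _ ≤ √3 * (1 + ‖x‖ ^ 2) ^ 2 * (1 + ‖x‖ ^ 2) := by gcongr
    _ = _ := by ring

lemma hh_int1 : Integrable (hh 1) := by
  refine Integrable.mono' (int_pow2.const_mul (3 * √3)) (hh_cont one_pos).aestronglyMeasurable
    (Filter.Eventually.of_forall fun x => ?_)
  have h : (0:ℝ) < 1 + ‖x‖ ^ 2 := by positivity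
  have h3 : (0:ℝ) < √3 := by positivity
  unfold hh
  rw [one_pow, Real.norm_eq_abs, abs_of_nonneg (by positivity), div_pow, one_pow]
  gcongr
  · nlinarith [sq_nonneg ‖x‖]
  · norm_num

lemma gg_scale {ε : ℝ} (hε : 0 < ε) (x : E3) : gg ε x = (ε ^ 3)⁻¹ * gg 1 (ε⁻¹ • x) := by
  have := den_pos hε x
  unfold gg
  rw [norm_smul, Real.norm_eq_abs, abs_of_pos (by positivity)]
  have e : (1:ℝ) ^ 2 + (ε⁻¹ * ‖x‖) ^ 2 = (ε ^ 2 + ‖x‖ ^ 2) / ε ^ 2 := by field_simp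
  rw [e]
  field_simp

lemma hh_scale {ε : ℝ} (hε : 0 < ε) (x : E3) : hh ε x = (ε ^ 3)⁻¹ * hh 1 (ε⁻¹ • x) := by
  have := den_pos hε x
  unfold hh
  rw [norm_smul, Real.norm_eq_abs, abs_of_pos (by positivity)]
  have e : (1:ℝ) ^ 2 + (ε⁻¹ * ‖x‖) ^ 2 = (ε ^ 2 + ‖x‖ ^ 2) / ε ^ 2 := by field_simp
  rw [e]
  field_simp

lemma scale_int {f g : E3 → ℝ} {ε : ℝ} (hε : 0 < ε) (hf : Integrable f)
    (h : ∀ x, g x = (ε ^ 3)⁻¹ * f (ε⁻¹ • x)) : Integrable g ∧ ∫ x, g x = ∫ x, f x := by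
  obtain rfl : g = fun x => (ε ^ 3)⁻¹ * f (ε⁻¹ • x) := funext h
  refine ⟨(hf.comp_smul (inv_ne_zero hε.ne')).const_mul _, ?_⟩
  rw [integral_const_mul, Measure.integral_comp_inv_smul]
  simp [abs_of_pos hε]
  field_simp

lemma gg_hh_eq : ∫ x, hh 1 x = ∫ x, gg 1 x := by
  have key : ∫ x, (hh 1 x - gg 1 x) = 0 := by
    set f : ℝ → ℝ := fun r => √3 * (3 - r ^ 2) / (1 + r ^ 2) ^ 3 with hf
    have e : ∀ x : E3, hh 1 x - gg 1 x = f ‖x‖ := by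
      intro x
      have h : (0:ℝ) < 1 + ‖x‖ ^ 2 := by positivity
      simp only [hh, gg, hf, one_pow]
      field_simp
    have hfint : Integrable (fun x : E3 => f ‖x‖) := by
      have h9 := hh_int1.sub gg_int1
      rwa [show hh 1 - gg 1 = fun x : E3 => f ‖x‖ from funext e] at h9
    simp_rw [e]
    rw [integral_fun_norm_addHaar volume f]
    have hio := (integrable_fun_norm_addHaar (E := E3) volume (f := f)).mp hfint
    have hfin : Module.finrank ℝ E3 = 3 := by simp
    rw [hfin] at hio ⊢
    have hF : ∀ r ∈ Set.Ioi (0:ℝ), HasDerivAt (fun r : ℝ => √3 * (r ^ 3 / (1 + r ^ 2) ^ 2))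
        (r ^ (3 - 1) • f r) r := by
      intro r _
      have h : (0:ℝ) < 1 + r ^ 2 := by positivity
      have h1 := (((hasDerivAt_id r).pow 2).const_add 1).pow 2
      have h2 := (((hasDerivAt_id r).pow 3).div h1 (by simp; positivity)).const_mul √3
      refine h2.congr_deriv ?_
      simp [hf]
      field_simp
      ring
    have := integral_Ioi_of_hasDerivAt_of_tendsto (a := 0) (m := 0) (f := fun r : ℝ => √3 * (r ^ 3 / (1 + r ^ 2) ^ 2)) (by
      refine Continuous.continuousWithinAt ?_
      refine continuous_const.mul (Continuous.div (by fun_prop) (by fun_prop) fun r => by positivity)) hF hio (by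
      have h0 : Filter.Tendsto (fun r : ℝ => √3 * r⁻¹) Filter.atTop (nhds 0) := by
        simpa using tendsto_inv_atTop_zero.const_mul √3
      refine squeeze_zero' ?_ ?_ h0
      · filter_upwards [Filter.eventually_gt_atTop 0] with r hr
        positivity
      · filter_upwards [Filter.eventually_gt_atTop 0] with r hr
        gcongr
        rw [inv_eq_one_div, div_le_div_iff₀ (by positivity) hr]
        nlinarith [sq_nonneg r])
    rw [this]
    simp
  rw [integral_sub hh_int1 gg_int1] at key
  linarith

structure Cut (ρ : ℝ) (ψ : ℝ → ℝ) : Prop where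
  hρ : 0 < ρ
  hρ1 : 4 * ρ ^ 2 < 1
  hs : ContDiff ℝ 1 ψ
  h1 : ∀ r : ℝ, 0 ≤ r → r ≤ ρ → ψ r = 1
  h01 : ∀ r : ℝ, ρ ≤ r → r ≤ 2 * ρ → ψ r ∈ Set.Icc (0 : ℝ) 1
  h0 : ∀ r : ℝ, 2 * ρ ≤ r → ψ r = 0

lemma Cut.mem {ρ : ℝ} {ψ : ℝ → ℝ} (h : Cut ρ ψ) {r : ℝ} (hr : 0 ≤ r) : ψ r ∈ Set.Icc (0 : ℝ) 1 := by
  rcases le_total r ρ with h1 | h1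
  · rw [h.h1 r hr h1]; simp
  rcases le_total r (2 * ρ) with h2 | h2
  · exact h.h01 r h1 h2
  · rw [h.h0 r h2]; simp

noncomputable def UU (ψ : ℝ → ℝ) (ε : ℝ) (x : E3) : ℝ := ψ ‖x‖ * uu ε x

section
variable {ρ : ℝ} {ψ : ℝ → ℝ}

lemma UU_cont (h : Cut ρ ψ) {ε : ℝ} (hε : 0 < ε) : Continuous (UU ψ ε) :=
  (h.hs.continuous.comp continuous_norm).mul (uu_cont hε)

lemma UU_nonneg (h : Cut ρ ψ) {ε : ℝ} (hε : 0 < ε) (x : E3) : 0 ≤ UU ψ ε x :=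
  mul_nonneg (h.mem (norm_nonneg x)).1 (uu_pos hε x).le

lemma UU_le (h : Cut ρ ψ) {ε : ℝ} (hε : 0 < ε) (x : E3) : UU ψ ε x ≤ uu ε x :=
  mul_le_of_le_one_left (uu_pos hε x).le (h.mem (norm_nonneg x)).2

lemma UU_zero (h : Cut ρ ψ) {ε : ℝ} {x : E3} (hx : 2 * ρ ≤ ‖x‖) : UU ψ ε x = 0 := by
  simp [UU, h.h0 _ hx]

lemma UU_eq (h : Cut ρ ψ) {ε : ℝ} {x : E3} (hx : ‖x‖ ≤ ρ) : UU ψ ε x = uu ε x := by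
  simp [UU, h.h1 _ (norm_nonneg x) hx]

lemma UU_comp_integrable (h : Cut ρ ψ) {ε : ℝ} (hε : 0 < ε) {f : ℝ → ℝ} (hf : Continuous f)
    (hf0 : f 0 = 0) : Integrable (fun x => f (UU ψ ε x)) := by
  refine (hf.comp (UU_cont h hε)).integrable_of_hasCompactSupport
    (HasCompactSupport.intro (isCompact_closedBall 0 (2 * ρ)) fun x hx => ?_)
  simp only [Function.comp]
  rw [UU_zero h, hf0]
  simp at hx
  exact hx.le

lemma uu_le_outer (hρ : 0 < ρ) {ε : ℝ} (hε : 0 < ε) {x : E3} (hx : ρ ≤ ‖x‖) :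
    uu ε x ^ 2 ≤ √3 * ε / ρ ^ 2 := by
  rw [uu_sq hε, ← mul_div_assoc]
  gcongr
  nlinarith [sq_nonneg ε]

lemma grad_bound (h : Cut ρ ψ) : ∃ C : ℝ, 0 ≤ C ∧ ∀ ε : ℝ, 0 < ε → ∀ x : E3,
    ‖fderiv ℝ (UU ψ ε) x‖ ^ 2 ≤ gg ε x + C * ε := by
  have hρ := h.hρ
  obtain ⟨P, hP⟩ := (isCompact_Icc (a := ρ) (b := 2 * ρ)).exists_bound_of_continuousOn
    (f := deriv ψ) (h.hs.continuous_deriv le_rfl).continuousOn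
  have hP0 : 0 ≤ P := (norm_nonneg _).trans (hP ρ ⟨le_rfl, by linarith⟩)
  refine ⟨(1 / ρ + P) ^ 2 * (√3 / ρ ^ 2), by positivity, fun ε hε x => ?_⟩
  have hC : 0 ≤ (1 / ρ + P) ^ 2 * (√3 / ρ ^ 2) * ε := by positivity
  have hd := den_pos hε x
  have hg : 0 ≤ gg ε x := by unfold gg; positivity
  rcases lt_or_ge ‖x‖ ρ with hx | hx
  · have : UU ψ ε =ᶠ[nhds x] uu ε := by
      filter_upwards [continuous_norm.continuousAt.eventually_lt continuousAt_const hx] with y hy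
      exact UU_eq h hy.le
    rw [this.fderiv_eq, uu_grad_sq hε]
    exact le_add_of_nonneg_right hC
  rcases lt_or_ge (2 * ρ) ‖x‖ with hx2 | hx2
  · have : UU ψ ε =ᶠ[nhds x] fun _ => 0 := by
      filter_upwards [continuousAt_const.eventually_lt continuous_norm.continuousAt hx2] with y hy
      exact UU_zero h hy.le
    rw [this.fderiv_eq]
    simp
    positivity
  have hx0 : x ≠ 0 := by
    rintro rfl
    simp at hx
    linarith
  have hdn : DifferentiableAt ℝ (fun y : E3 => ‖y‖) x := (contDiffAt_norm ℝ (n := 1) hx0).differentiableAt (by simp)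
  have hdψ : DifferentiableAt ℝ ψ ‖x‖ := (h.hs.differentiable (by simp)) _
  have hfd : HasFDerivAt (fun y : E3 => ψ ‖y‖) (deriv ψ ‖x‖ • fderiv ℝ (fun y : E3 => ‖y‖) x) x :=
    hdψ.hasDerivAt.comp_hasFDerivAt x hdn.hasFDerivAt
  have hU := (hfd.mul (uu_hasFDerivAt hε x)).fderiv
  have hU' : fderiv ℝ (UU ψ ε) x = _ := hU
  have hn1 : ‖fderiv ℝ (fun y : E3 => ‖y‖) x‖ ≤ 1 := by
    simpa using norm_fderiv_le_of_lipschitz ℝ (x₀ := x) (lipschitzWith_one_norm (E := E3))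
  have hup := uu_pos hε x
  have hψx := h.mem (norm_nonneg x)
  have hnx : 0 < ‖x‖ := hρ.trans_le hx
  have hb : ‖fderiv ℝ (UU ψ ε) x‖ ≤ (1 / ρ + P) * uu ε x := by
    rw [hU']
    refine (norm_add_le _ _).trans ?_
    rw [add_mul]
    gcongr
    · rw [← (uu_hasFDerivAt hε x).fderiv, norm_smul, uu_grad_norm hε, Real.norm_eq_abs, abs_of_nonneg hψx.1]
      refine (mul_le_of_le_one_left (by positivity) hψx.2).trans ?_
      rw [div_mul_eq_mul_div, div_mul_eq_mul_div, div_le_div_iff₀ hd hρ]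
      have : ‖x‖ * ρ ≤ ε ^ 2 + ‖x‖ ^ 2 := by nlinarith [sq_nonneg ε]
      nlinarith
    · rw [norm_smul, norm_smul, Real.norm_eq_abs, abs_of_pos hup, mul_comm]
      gcongr
      calc _ ≤ P * 1 := by gcongr; exact hP _ ⟨hx, hx2⟩
        _ = P := mul_one P
  calc ‖fderiv ℝ (UU ψ ε) x‖ ^ 2 ≤ ((1 / ρ + P) * uu ε x) ^ 2 := by gcongr
    _ = (1 / ρ + P) ^ 2 * uu ε x ^ 2 := by ring
    _ ≤ (1 / ρ + P) ^ 2 * (√3 * ε / ρ ^ 2) := by gcongr; exact uu_le_outer hρ hε hx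
    _ = (1 / ρ + P) ^ 2 * (√3 / ρ ^ 2) * ε := by ring
    _ ≤ _ := by linarith

lemma A_bound_s19 (h : Cut ρ ψ) {Ω : Set E3} (hΩb : Bornology.IsBounded Ω) :
    ∃ C : ℝ, 0 ≤ C ∧ ∀ ε : ℝ, 0 < ε →
      ∫ x in Ω, ‖fderiv ℝ (UU ψ ε) x‖ ^ 2 ≤ (∫ x, gg 1 x) + C * ε := by
  obtain ⟨C, hC, hb⟩ := grad_bound h
  refine ⟨C * (volume Ω).toReal, by positivity, fun ε hε => ?_⟩
  obtain ⟨gi, ge⟩ := scale_int hε gg_int1 (gg_scale hε)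
  have hfin : volume Ω < ⊤ := hΩb.measure_lt_top
  have hci : IntegrableOn (fun _ : E3 => C * ε) Ω := integrableOn_const hfin.ne
  calc ∫ x in Ω, ‖fderiv ℝ (UU ψ ε) x‖ ^ 2 ≤ ∫ x in Ω, (gg ε x + C * ε) := by
        refine integral_mono_of_nonneg (Filter.Eventually.of_forall fun x => by positivity)
          (gi.integrableOn.add hci) (Filter.Eventually.of_forall fun x => hb ε hε x)
    _ = (∫ x in Ω, gg ε x) + ∫ x in Ω, C * ε := integral_add gi.integrableOn hci
    _ ≤ (∫ x, gg ε x) + C * (volume Ω).toReal * ε := by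
        gcongr ?_ + ?_
        · refine setIntegral_le_integral gi (Filter.Eventually.of_forall fun x => ?_)
          have := den_pos hε x
          simp only [Pi.zero_apply, gg]; positivity
        · simp [Measure.real]
          apply le_of_eq; ring
    _ = _ := by rw [ge]

lemma uu_six {ε : ℝ} (hε : 0 < ε) (x : E3) : uu ε x ^ 6 = hh ε x := by
  rw [show uu ε x ^ 6 = (uu ε x ^ 2) ^ 3 by ring, uu_sq hε, mul_pow, hh]
  congr 1
  rw [pow_succ, Real.sq_sqrt (by norm_num)]

lemma B_bound_s19 (h : Cut ρ ψ) : ∃ C : ℝ, 0 ≤ C ∧ ∀ ε : ℝ, 0 < ε → ε ≤ 1 →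
      (∫ x, gg 1 x) - C * ε ≤ ∫ x, UU ψ ε x ^ 6 := by
  have hρ := h.hρ
  have hK : 0 ≤ ∫ x, hh 1 x := integral_nonneg fun x => by
    have := den_pos one_pos x
    simp only [Pi.zero_apply, hh]; positivity
  refine ⟨((1 + ρ ^ 2) / ρ ^ 2) ^ 3 * ∫ x, hh 1 x, by positivity, fun ε hε hε1 => ?_⟩
  obtain ⟨gi, ge⟩ := scale_int hε hh_int1 (hh_scale hε)
  rw [← gg_hh_eq]
  have e : (∫ x, hh 1 x) - ((1 + ρ ^ 2) / ρ ^ 2) ^ 3 * (∫ x, hh 1 x) * ε =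
      ∫ x, (hh ε x - ((1 + ρ ^ 2) / ρ ^ 2) ^ 3 * ε * hh 1 x) := by
    rw [integral_sub gi (hh_int1.const_mul _), ge, integral_const_mul]
    ring
  rw [e]
  refine integral_mono (gi.sub (hh_int1.const_mul _))
    (UU_comp_integrable h hε (f := fun s => s ^ 6) (by fun_prop) (by simp)) fun x => ?_
  have h1 := den_pos one_pos x
  have hd := den_pos hε x
  have hh1 : 0 ≤ hh 1 x := by unfold hh; positivity
  rcases le_total ‖x‖ ρ with hx | hx
  · simp only [UU_eq h hx, uu_six hε]
    have : 0 ≤ ((1 + ρ ^ 2) / ρ ^ 2) ^ 3 * ε * hh 1 x := by positivity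
    linarith
  · have : hh ε x ≤ ((1 + ρ ^ 2) / ρ ^ 2) ^ 3 * ε * hh 1 x := by
      have h3 : ε / (ε ^ 2 + ‖x‖ ^ 2) ≤ (1 + ρ ^ 2) / ρ ^ 2 * ε * (1 / (1 ^ 2 + ‖x‖ ^ 2)) := by
        rw [div_mul_eq_mul_div, div_mul_div_comm, div_le_div_iff₀ hd (by positivity)]
        have : ρ ^ 2 * (1 ^ 2 + ‖x‖ ^ 2) ≤ (1 + ρ ^ 2) * (ε ^ 2 + ‖x‖ ^ 2) := by
          have : ρ ^ 2 ≤ ‖x‖ ^ 2 := by gcongr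
          nlinarith [sq_nonneg ε, sq_nonneg ρ, mul_nonneg (sq_nonneg ε) (sq_nonneg ρ)]
        nlinarith
      calc hh ε x ≤ 3 * √3 * ((1 + ρ ^ 2) / ρ ^ 2 * ε * (1 / (1 ^ 2 + ‖x‖ ^ 2))) ^ 3 := by
            unfold hh; gcongr
        _ = ((1 + ρ ^ 2) / ρ ^ 2) ^ 3 * ε ^ 3 * hh 1 x := by unfold hh; ring
        _ ≤ ((1 + ρ ^ 2) / ρ ^ 2) ^ 3 * ε * hh 1 x := by
            gcongr
            nlinarith [pow_le_one₀ hε.le hε1 (n := 2)]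
    have h6 : 0 ≤ UU ψ ε x ^ 6 := by positivity
    simp only
    linarith

lemma radial_int (R : ℝ) (hR : 0 < R) (f : ℝ → ℝ) (hf : IntervalIntegrable f volume 0 R) :
    IntegrableOn (fun x : E3 => f ‖x‖ / ‖x‖ ^ 2) (Metric.ball 0 R) := by
  rw [integrableOn_fun_norm_addHaar (E := E3) volume (f := fun r => f r / r ^ 2)]
  have hfin : Module.finrank ℝ E3 = 3 := by simp
  rw [hfin]
  have := (intervalIntegrable_iff_integrableOn_Ioo_of_le hR.le).mp hf
  refine this.congr_fun (fun r hr => ?_) measurableSet_Ioo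
  have := hr.1.ne'
  simp
  field_simp

lemma ball_int (h : Cut ρ ψ) {ε : ℝ} {f : ℝ → ℝ} (hf0 : f 0 = 0) :
    ∫ x, f (UU ψ ε x) = ∫ x in Metric.ball (0 : E3) (2 * ρ), f (UU ψ ε x) := by
  refine (setIntegral_eq_integral_of_forall_compl_eq_zero fun x hx => ?_).symm
  rw [UU_zero h, hf0]
  simpa using hx

lemma UU_sq_le (h : Cut ρ ψ) {ε : ℝ} (hε : 0 < ε) {x : E3} (hx : x ≠ 0) :
    UU ψ ε x ^ 2 ≤ √3 * ε * (1 / ‖x‖ ^ 2) := by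
  have hn : 0 < ‖x‖ := norm_pos_iff.mpr hx
  calc UU ψ ε x ^ 2 ≤ uu ε x ^ 2 := by
        have := UU_nonneg h hε x
        gcongr; exact UU_le h hε x
    _ = √3 * ε * (1 / (ε ^ 2 + ‖x‖ ^ 2)) := by rw [uu_sq hε]; ring
    _ ≤ _ := by gcongr; nlinarith [sq_nonneg ε]

lemma ae_ne_s19 (s : Set E3) : ∀ᵐ x : E3 ∂(volume.restrict s), x ≠ 0 := 
  ae_restrict_of_ae (Measure.ae_ne volume 0)

lemma M_upper (h : Cut ρ ψ) : ∃ C : ℝ, 0 ≤ C ∧ ∀ ε : ℝ, 0 < ε →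
    ∫ x, UU ψ ε x ^ 2 ≤ C * ε := by
  have hρ := h.hρ
  have hi := radial_int (2 * ρ) (by positivity) (fun _ => 1) (by simp)
  refine ⟨√3 * ∫ x in Metric.ball (0 : E3) (2 * ρ), 1 / ‖x‖ ^ 2,
    mul_nonneg (by positivity) (integral_nonneg fun x => by simp only [Pi.zero_apply]; positivity),
    fun ε hε => ?_⟩
  rw [ball_int h (f := fun s => s ^ 2) (by simp)]
  calc _ ≤ ∫ x in Metric.ball (0 : E3) (2 * ρ), √3 * ε * (1 / ‖x‖ ^ 2) := by
        refine integral_mono_of_nonneg (Filter.Eventually.of_forall fun x => by simp only [Pi.zero_apply]; positivity)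
          (hi.const_mul _) ?_
        filter_upwards [ae_ne_s19 (Metric.ball (0 : E3) (2 * ρ))] with x hx
        exact UU_sq_le h hε hx
    _ = _ := by rw [integral_const_mul]; ring

lemma M_lower (h : Cut ρ ψ) : ∃ m : ℝ, 0 < m ∧ ∀ ε : ℝ, 0 < ε → ε ≤ 1 →
    m * ε ≤ ∫ x, UU ψ ε x ^ 2 := by
  have hρ := h.hρ
  have hv : 0 < (volume : Measure E3).real (Metric.ball (0 : E3) ρ) :=
    ENNReal.toReal_pos (Metric.measure_ball_pos volume _ hρ).ne' measure_ball_lt_top.ne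
  refine ⟨√3 / (1 + ρ ^ 2) * (volume : Measure E3).real (Metric.ball (0 : E3) ρ), by positivity, fun ε hε hε1 => ?_⟩
  have hi := UU_comp_integrable h hε (f := fun s => s ^ 2) (by fun_prop) (by simp)
  calc _ = ∫ x in Metric.ball (0 : E3) ρ, √3 / (1 + ρ ^ 2) * ε := by
        simp; ring
    _ ≤ ∫ x in Metric.ball (0 : E3) ρ, UU ψ ε x ^ 2 := by
        refine setIntegral_mono_on (integrableOn_const measure_ball_lt_top.ne) hi.integrableOn
          measurableSet_ball fun x hx => ?_
        have hx' : ‖x‖ < ρ := by simpa using hx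
        have hd := den_pos hε x
        rw [UU_eq h hx'.le, uu_sq hε, div_mul_eq_mul_div, mul_div_assoc]
        gcongr
        nlinarith
    _ ≤ _ := setIntegral_le_integral hi (Filter.Eventually.of_forall fun x => by simp only [Pi.zero_apply]; positivity)

lemma sq_log_cont : Continuous (fun s : ℝ => s ^ 2 * Real.log (s ^ 2)) :=
  Real.continuous_mul_log.comp (continuous_pow 2)

lemma L_upper (h : Cut ρ ψ) : ∃ C : ℝ, 0 ≤ C ∧ ∀ ε : ℝ, 0 < ε → ε ≤ 1 →
    ∫ x, UU ψ ε x ^ 2 * Real.log (UU ψ ε x ^ 2) ≤ Real.log ε * (∫ x, UU ψ ε x ^ 2) + C * ε := by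
  have hρ := h.hρ
  have h2ρ : 2 * ρ < 1 := by nlinarith [h.hρ1]
  have hi := radial_int (2 * ρ) (by positivity) (fun r => Real.log √3 - 2 * Real.log r)
    (intervalIntegrable_const.sub (intervalIntegral.intervalIntegrable_log'.const_mul 2))
  set J := ∫ x in Metric.ball (0 : E3) (2 * ρ), (Real.log √3 - 2 * Real.log ‖x‖) / ‖x‖ ^ 2 with hJ
  have hl3 : 0 ≤ Real.log √3 := Real.log_nonneg (by rw [Real.one_le_sqrt]; norm_num)
  have hlr : ∀ x : E3, x ∈ Metric.ball (0 : E3) (2 * ρ) → 0 ≤ Real.log √3 - 2 * Real.log ‖x‖ := by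
    intro x hx
    have hx' : ‖x‖ < 2 * ρ := by simpa using hx
    have := Real.log_nonpos (norm_nonneg x) (by linarith)
    linarith
  have hJ0 : 0 ≤ J := setIntegral_nonneg measurableSet_ball fun x hx =>
    div_nonneg (hlr x hx) (by positivity)
  refine ⟨√3 * J, by positivity, fun ε hε hε1 => ?_⟩
  rw [ball_int h (f := fun s => s ^ 2 * Real.log (s ^ 2)) (by simp),
    ball_int h (f := fun s => s ^ 2) (by simp)]
  have i1 := UU_comp_integrable h hε sq_log_cont (by simp)
  have i2 := UU_comp_integrable h hε (f := fun s => s ^ 2) (by fun_prop) (by simp)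
  rw [show √3 * J * ε = √3 * ε * J by ring, hJ, ← integral_const_mul, ← integral_const_mul,
    ← integral_add (i2.integrableOn.const_mul _) (hi.const_mul _)]
  refine integral_mono_ae i1.integrableOn ((i2.integrableOn.const_mul _).add (hi.const_mul _)) ?_
  filter_upwards [ae_ne_s19 (Metric.ball (0 : E3) (2 * ρ)), ae_restrict_mem measurableSet_ball] with x hx hxb
  have hn : 0 < ‖x‖ := norm_pos_iff.mpr hx
  have hle := UU_sq_le h hε hx
  have hq0 : 0 ≤ UU ψ ε x ^ 2 := by positivity
  have hlx := hlr x hxb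
  rcases hq0.eq_or_lt with h0 | h0
  · simp only [← h0]
    simp
    positivity
  have hlog : Real.log (UU ψ ε x ^ 2) ≤ Real.log ε + (Real.log √3 - 2 * Real.log ‖x‖) := by
    refine (Real.log_le_log h0 hle).trans (le_of_eq ?_)
    rw [Real.log_mul (by positivity) (by positivity), Real.log_mul (by positivity) (by positivity),
      one_div, Real.log_inv, Real.log_pow]
    push_cast; ring
  calc _ ≤ UU ψ ε x ^ 2 * (Real.log ε + (Real.log √3 - 2 * Real.log ‖x‖)) := by gcongr
    _ = Real.log ε * UU ψ ε x ^ 2 + UU ψ ε x ^ 2 * (Real.log √3 - 2 * Real.log ‖x‖) := by ring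
    _ ≤ Real.log ε * UU ψ ε x ^ 2 + √3 * ε * (1 / ‖x‖ ^ 2) * (Real.log √3 - 2 * Real.log ‖x‖) := by gcongr
    _ = _ := by ring

end

lemma final_ineq {K C c ε ℓ s : ℝ} (hK : 0 < K) (hC : 0 ≤ C) (hε : 0 < ε) (hs : 0 ≤ s)
    (hc : 7 * C < c * ℓ) (h1 : 24 * 3 * C * ε < K) :
    K * (s / 2 - s ^ 3 / 6) + C * ε * (s + s ^ 2 + s ^ 3) - c * ε * ℓ * s < K / 3 := by
  have hid : K * (s / 2 - s ^ 3 / 6) - K / 3 = - (K / 6 * ((s - 1) ^ 2 * (s + 2))) := by ring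
  have hcp : 0 ≤ c * ε * ℓ * s := by
    have : 0 ≤ c * ℓ := by linarith
    have : 0 ≤ (c * ℓ) * (ε * s) := by positivity
    linarith
  have hCε : 0 ≤ C * ε := by positivity
  rcases le_total s (1 / 2) with h2 | h2
  · have e1 : 1 / 2 ≤ (s - 1) ^ 2 * (s + 2) := by nlinarith [sq_nonneg (s - 1)]
    have e2 : s + s ^ 2 + s ^ 3 ≤ 1 := by nlinarith [sq_nonneg s]
    have e3 : K / 6 * (1 / 2) ≤ K / 6 * ((s - 1) ^ 2 * (s + 2)) := by gcongr
    have e4 : C * ε * (s + s ^ 2 + s ^ 3) ≤ C * ε * 1 := by gcongr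
    linarith
  have hs0 : 0 < s := by linarith
  rcases le_total s 2 with h3 | h3
  · have e1 : 0 ≤ K / 6 * ((s - 1) ^ 2 * (s + 2)) := by positivity
    have e2 : s + s ^ 2 + s ^ 3 ≤ 7 * s := by nlinarith
    have e4 : C * ε * (s + s ^ 2 + s ^ 3) ≤ C * ε * (7 * s) := by gcongr
    have e5 : 7 * C * (ε * s) < c * ℓ * (ε * s) := by gcongr
    linarith
  · have e1 : s ^ 3 / 4 ≤ (s - 1) ^ 2 * (s + 2) := by nlinarith [mul_nonneg hs hs]
    have e2 : s + s ^ 2 + s ^ 3 ≤ 3 * s ^ 3 := by nlinarith [mul_nonneg hs hs]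
    have e3 : K / 6 * (s ^ 3 / 4) ≤ K / 6 * ((s - 1) ^ 2 * (s + 2)) := by gcongr
    have e4 : C * ε * (s + s ^ 2 + s ^ 3) ≤ C * ε * (3 * s ^ 3) := by gcongr
    have e5 : 72 * C * ε * s ^ 3 < K * s ^ 3 := by gcongr; linarith
    linarith

/-- Lemma 3.7 (`N = 3`, `(λ, μ) ∈ C₀`): if `μ < 0` and
`K₃/3 + (μ/2) e^{-λ/μ} |Ω| > 0` (where `K₃ = ∫_{ℝ³} |∇u_1|² = S^{3/2}`), then with
`U_ε(x) = ψ(|x|) u_ε(x)` there is `ε₀ > 0` such that `I(t U_ε) < K₃/3 = (1/3) S^{3/2}`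
for all `ε ∈ (0, ε₀)` and `t ≥ 0` (here `2* = 6`). -/
theorem stmt_19 (lam μ : ℝ) (hμ : μ < 0)
    (Ω : Set (EuclideanSpace ℝ (Fin 3))) (hΩo : IsOpen Ω)
    (hΩb : Bornology.IsBounded Ω) (h0Ω : (0 : EuclideanSpace ℝ (Fin 3)) ∈ Ω)
    (u : ℝ → EuclideanSpace ℝ (Fin 3) → ℝ)
    (hu : ∀ ε : ℝ, 0 < ε → ∀ x : EuclideanSpace ℝ (Fin 3),
      u ε x = (3 : ℝ) ^ ((1 : ℝ) / 4) * (ε / (ε ^ 2 + ‖x‖ ^ 2)) ^ ((1 : ℝ) / 2))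
    (K : ℝ) (hK : K = ∫ x : EuclideanSpace ℝ (Fin 3), ‖fderiv ℝ (u 1) x‖ ^ 2)
    (hC₀ : K / 3 + μ / 2 * Real.exp (-lam / μ) * (volume Ω).toReal > 0)
    (ρ : ℝ) (hρ : 0 < ρ) (hρ1 : 4 * ρ ^ 2 < 1)
    (hball : Metric.closedBall (0 : EuclideanSpace ℝ (Fin 3)) (2 * ρ) ⊆ Ω)
    (ψ : ℝ → ℝ) (hψs : ContDiff ℝ 1 ψ)
    (hψ1 : ∀ r : ℝ, 0 ≤ r → r ≤ ρ → ψ r = 1)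
    (hψ01 : ∀ r : ℝ, ρ ≤ r → r ≤ 2 * ρ → ψ r ∈ Set.Icc (0 : ℝ) 1)
    (hψ0 : ∀ r : ℝ, 2 * ρ ≤ r → ψ r = 0)
    (I : (EuclideanSpace ℝ (Fin 3) → ℝ) → ℝ)
    (hI : ∀ v : EuclideanSpace ℝ (Fin 3) → ℝ,
      I v = (1 / 2) * (∫ x in Ω, ‖fderiv ℝ v x‖ ^ 2) -
        (1 / 6) * (∫ x in Ω, (max (v x) 0) ^ 6) -
        (lam / 2) * (∫ x in Ω, (max (v x) 0) ^ 2) -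
        (μ / 2) * (∫ x in Ω, (max (v x) 0) ^ 2 * (Real.log ((max (v x) 0) ^ 2) - 1))) :
    ∃ ε₀ : ℝ, 0 < ε₀ ∧ ∀ ε ∈ Set.Ioo (0 : ℝ) ε₀, ∀ t : ℝ, 0 ≤ t →
      I (fun x => t * (ψ ‖x‖ * u ε x)) < K / 3 := by
  have hcut : Cut ρ ψ := ⟨hρ, hρ1, hψs, hψ1, hψ01, hψ0⟩
  have huu : ∀ ε : ℝ, 0 < ε → u ε = uu ε := fun ε hε => funext fun x => hu ε hε x
  have hKg : K = ∫ x, gg 1 x := by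
    rw [hK, huu 1 one_pos]
    exact integral_congr_ae (Filter.Eventually.of_forall fun x => uu_grad_sq one_pos x)
  have hK0 : 0 < K := by
    have : 0 ≤ (-μ / 2) * Real.exp (-lam / μ) * (volume Ω).toReal := by
      have : 0 ≤ -μ / 2 := by linarith
      positivity
    linarith
  obtain ⟨CA, hCA, hA⟩ := A_bound_s19 hcut hΩb
  obtain ⟨CB, hCB, hB⟩ := B_bound_s19 hcut
  obtain ⟨CM, hCM, hM⟩ := M_upper hcut
  obtain ⟨m, hm, hMl⟩ := M_lower hcut
  obtain ⟨CL, hCL, hL⟩ := L_upper hcut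
  rw [← hKg] at hA hB
  obtain ⟨ν, hν⟩ : ∃ ν : ℝ, ν = -μ / 2 := ⟨_, rfl⟩
  have hν0 : 0 < ν := by rw [hν]; linarith
  set C := CA / 2 + CB / 6 + |lam| / 2 * CM + ν * CL + ν * CM with hC
  have hC0 : 0 ≤ C := by positivity
  refine ⟨min 1 (min (K / (72 * C + 1)) (Real.exp (-((7 * C + 1) / (ν * m))))), by positivity, ?_⟩
  rintro ε ⟨hε, hεlt⟩ t ht
  rw [lt_min_iff, lt_min_iff] at hεlt
  obtain ⟨hε1, hε2, hε3⟩ := hεlt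
  rw [lt_div_iff₀ (by positivity)] at hε2
  have hlogε : 7 * C < ν * m * (-Real.log ε) := by
    have h1 : Real.log ε < -((7 * C + 1) / (ν * m)) := (Real.log_lt_iff_lt_exp hε).mpr hε3
    have h2 : (7 * C + 1) / (ν * m) < -Real.log ε := by linarith
    rw [div_lt_iff₀ (by positivity)] at h2
    linarith
  have hlog0 : Real.log ε ≤ 0 := Real.log_nonpos hε.le hε1.le
  have hv : (fun x => t * (ψ ‖x‖ * u ε x)) = fun x => t * UU ψ ε x := by
    rw [huu ε hε]; rfl
  rw [hv, hI]
  have hmax : ∀ x, max (t * UU ψ ε x) 0 = t * UU ψ ε x := fun x =>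
    max_eq_left (mul_nonneg ht (UU_nonneg hcut hε x))
  simp only [hmax]
  have hout : ∀ x, x ∉ Ω → UU ψ ε x = 0 := by
    intro x hx
    refine UU_zero hcut ?_
    by_contra hlt
    exact hx (hball (by simpa using (not_le.mp hlt).le))
  have iM := UU_comp_integrable hcut hε (f := fun s => s ^ 2) (by fun_prop) (by simp)
  have iL := UU_comp_integrable hcut hε sq_log_cont (by simp)
  have eA : ∫ x in Ω, ‖fderiv ℝ (fun x => t * UU ψ ε x) x‖ ^ 2 =
      t ^ 2 * ∫ x in Ω, ‖fderiv ℝ (UU ψ ε) x‖ ^ 2 := by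
    rw [← integral_const_mul]
    congr 1
    funext x
    have : fderiv ℝ (fun x => t * UU ψ ε x) x = t • fderiv ℝ (UU ψ ε) x := by
      have := fderiv_const_smul_field (𝕜 := ℝ) (f := UU ψ ε) t
      exact congrFun this x
    rw [this, norm_smul, mul_pow, Real.norm_eq_abs, sq_abs]
  have eB : ∫ x in Ω, (t * UU ψ ε x) ^ 6 = t ^ 6 * ∫ x, UU ψ ε x ^ 6 := by
    rw [setIntegral_eq_integral_of_forall_compl_eq_zero (fun x hx => by simp [hout x hx]),
      ← integral_const_mul]
    simp only [mul_pow]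
  have eM : ∫ x in Ω, (t * UU ψ ε x) ^ 2 = t ^ 2 * ∫ x, UU ψ ε x ^ 2 := by
    rw [setIntegral_eq_integral_of_forall_compl_eq_zero (fun x hx => by simp [hout x hx]),
      ← integral_const_mul]
    simp only [mul_pow]
  have eL : ∫ x in Ω, (t * UU ψ ε x) ^ 2 * (Real.log ((t * UU ψ ε x) ^ 2) - 1) =
      t ^ 2 * (∫ x, UU ψ ε x ^ 2 * Real.log (UU ψ ε x ^ 2)) +
      t ^ 2 * (Real.log (t ^ 2) - 1) * ∫ x, UU ψ ε x ^ 2 := by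
    rw [setIntegral_eq_integral_of_forall_compl_eq_zero (fun x hx => by simp [hout x hx]),
      ← integral_const_mul, ← integral_const_mul, ← integral_add (iL.const_mul _) (iM.const_mul _)]
    congr 1
    funext x
    rcases ht.eq_or_lt with h0 | h0
    · simp [← h0]
    rcases (UU_nonneg hcut hε x).eq_or_lt with h1 | h1
    · simp [← h1]
    rw [mul_pow, Real.log_mul (by positivity) (by positivity)]
    ring
  rw [eA, eB, eM, eL]
  have bA := hA ε hε
  have bB := hB ε hε hε1.le
  have bM := hM ε hε
  have bMl := hMl ε hε hε1.le
  have bL := hL ε hε hε1.le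
  generalize (∫ x in Ω, ‖fderiv ℝ (UU ψ ε) x‖ ^ 2) = A at *
  generalize (∫ x, UU ψ ε x ^ 6) = B at *
  generalize (∫ x, UU ψ ε x ^ 2) = M at *
  generalize (∫ x, UU ψ ε x ^ 2 * Real.log (UU ψ ε x ^ 2)) = L at *
  have hs : 0 ≤ t ^ 2 := by positivity
  rw [show t ^ 6 = (t ^ 2) ^ 3 by ring]
  generalize t ^ 2 = s at *
  have hM0 : 0 ≤ M := le_trans (by positivity) bMl
  have hfin := final_ineq (c := ν * m) (ℓ := -Real.log ε) hK0 hC0 hε hs hlogε (by linarith)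
  refine lt_of_le_of_lt ?_ hfin
  have t1 : s * A ≤ s * (K + CA * ε) := by gcongr
  have t2 : s ^ 3 * (K - CB * ε) ≤ s ^ 3 * B := by gcongr
  have t3 : -lam * (s * M) ≤ |lam| * (s * (CM * ε)) :=
    calc -lam * (s * M) ≤ |lam| * (s * M) := by gcongr; exact neg_le_abs lam
      _ ≤ _ := by gcongr
  have t4 : ν * (s * L) ≤ ν * (s * (Real.log ε * (m * ε) + CL * ε)) := by
    have : Real.log ε * M ≤ Real.log ε * (m * ε) := mul_le_mul_of_nonpos_left bMl hlog0
    gcongr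
    linarith
  have t5 : ν * (s * (Real.log s - 1) * M) ≤ ν * (s * s * (CM * ε)) := by
    have h1 : Real.log s - 1 ≤ s := by
      have := Real.log_le_self hs
      linarith
    calc ν * (s * (Real.log s - 1) * M) ≤ ν * (s * s * M) := by gcongr
      _ ≤ _ := by gcongr
  have hμν : μ = -2 * ν := by rw [hν]; ring
  have p1 : 0 ≤ CA * ε * (s ^ 2 + s ^ 3) := by positivity
  have p2 : 0 ≤ CB * ε * (s + s ^ 2) := by positivity
  have p3 : 0 ≤ |lam| * CM * ε * (s ^ 2 + s ^ 3) := by positivity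
  have p4 : 0 ≤ ν * CL * ε * (s ^ 2 + s ^ 3) := by positivity
  have p5 : 0 ≤ ν * CM * ε * (s + s ^ 3) := by positivity
  rw [hC, hμν]
  linarith
end
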